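/- For every n ≥ 4, the functor St(n,−) satisfies the Tulenbaev lifting property: for every commutative ring R and every non-nilpotent a ∈ R there exists a group homomorphism T : St(n, R_a[X], XR_a[X]) → St(n, R⋉XR_a[X]) such that μ_* ∘ T is the inclusion St(n, R_a[X], XR_a[X]) ↪ St(n, R_a[X]), and T composed with the restriction of μ_* to St(n, R⋉XR_a[X], XR_a[X]) is the inclusion St(n, R⋉XR_a[X], XR_a[X]) ↪ St(n, R⋉XR_a[X]). -/

import Mathlib

open scoped commutatorElement

/-- Generators of the Steinberg group: triples (i,j,r) with i ≠ j. -/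
abbrev StGen (n : ℕ) (R : Type) : Type := {p : Fin n × Fin n // p.1 ≠ p.2} × R

/-- The Steinberg relations. -/
inductive StRels (n : ℕ) (R : Type) [CommRing R] : FreeGroup (StGen n R) → Prop
  | add (i j : Fin n) (hij : i ≠ j) (r s : R) :
      StRels n R (FreeGroup.of (⟨(i, j), hij⟩, r) * FreeGroup.of (⟨(i, j), hij⟩, s) *
        (FreeGroup.of (⟨(i, j), hij⟩, r + s))⁻¹)
  | commZero (i j h k : Fin n) (hij : i ≠ j) (hhk : h ≠ k) (hjh : j ≠ h) (hik : i ≠ k) (r s : R) :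
      StRels n R ⁅(FreeGroup.of (⟨(i, j), hij⟩, r) : FreeGroup (StGen n R)), FreeGroup.of (⟨(h, k), hhk⟩, s)⁆
  | commAdd (i j k : Fin n) (hij : i ≠ j) (hjk : j ≠ k) (hik : i ≠ k) (r s : R) :
      StRels n R (⁅(FreeGroup.of (⟨(i, j), hij⟩, r) : FreeGroup (StGen n R)), FreeGroup.of (⟨(j, k), hjk⟩, s)⁆ *
        (FreeGroup.of (⟨(i, k), hik⟩, r * s))⁻¹)

/-- The Steinberg group `St(n, R)`. -/
abbrev SteinbergGroup (n : ℕ) (R : Type) [CommRing R] : Type :=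
  PresentedGroup {w | StRels n R w}

/-- The generator `x_{ij}(r)` of the Steinberg group. -/
def stx (n : ℕ) (R : Type) [CommRing R] (i j : Fin n) (hij : i ≠ j) (r : R) :
    SteinbergGroup n R :=
  PresentedGroup.of (⟨(i, j), hij⟩, r)

/-- The fiber product ring `R ⋉ XR_a[X] = {(r, h) : h(0) = λ_a r}`. -/
def fiberRing (R : Type) [CommRing R] (a : R) :
    Subring (R × Polynomial (Localization.Away a)) where
  carrier := {p | Polynomial.eval 0 p.2 = algebraMap R (Localization.Away a) p.1}
  zero_mem' := by simp
  one_mem' := by simp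
  add_mem' := by
    intro x y hx hy
    simp only [Set.mem_setOf_eq, Prod.snd_add, Polynomial.eval_add, Prod.fst_add, map_add] at *
    rw [hx, hy]
  neg_mem' := by
    intro x hx
    simp only [Set.mem_setOf_eq, Prod.snd_neg, Polynomial.eval_neg, Prod.fst_neg, map_neg] at *
    rw [hx]
  mul_mem' := by
    intro x y hx hy
    simp only [Set.mem_setOf_eq, Prod.snd_mul, Polynomial.eval_mul, Prod.fst_mul, map_mul] at *
    rw [hx, hy]

/-- The Tulenbaev lifting property for the functor `St(n, -)`. -/
def TulenbaevLifting (n : ℕ) : Prop :=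
  ∀ (R : Type) [CommRing R] (a : R), ¬ IsNilpotent a →
  ∀ (pSt : SteinbergGroup n (fiberRing R a) →* SteinbergGroup n R),
    (∀ (i j : Fin n) (hij : i ≠ j) (x : fiberRing R a),
      pSt (stx n (fiberRing R a) i j hij x) = stx n R i j hij x.val.1) →
  ∀ (μSt : SteinbergGroup n (fiberRing R a) →*
      SteinbergGroup n (Polynomial (Localization.Away a))),
    (∀ (i j : Fin n) (hij : i ≠ j) (x : fiberRing R a),
      μSt (stx n (fiberRing R a) i j hij x) =
        stx n (Polynomial (Localization.Away a)) i j hij x.val.2) →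
  ∀ (ev0 : SteinbergGroup n (Polynomial (Localization.Away a)) →*
      SteinbergGroup n (Localization.Away a)),
    (∀ (i j : Fin n) (hij : i ≠ j) (p : Polynomial (Localization.Away a)),
      ev0 (stx n (Polynomial (Localization.Away a)) i j hij p) =
        stx n (Localization.Away a) i j hij (Polynomial.eval 0 p)) →
  ∃ T : ev0.ker →* SteinbergGroup n (fiberRing R a),
    (∀ g : ev0.ker, μSt (T g) = (g : SteinbergGroup n (Polynomial (Localization.Away a)))) ∧
    (∀ h : SteinbergGroup n (fiberRing R a), pSt h = 1 →
      ∀ hm : μSt h ∈ ev0.ker, T ⟨μSt h, hm⟩ = h)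



namespace TL

section basics
variable {n : ℕ} {B : Type} [CommRing B]

/-- total version of the generator -/
def x (i j : Fin n) (r : B) : SteinbergGroup n B :=
  if h : i ≠ j then stx n B i j h r else 1

lemma x_of (i j : Fin n) (h : i ≠ j) (r : B) : x i j r = stx n B i j h r := dif_pos h

lemma x_self (i : Fin n) (r : B) : x i i r = 1 := by simp [x]

lemma x_add (i j : Fin n) (r s : B) : x i j (r + s) = x i j r * x i j s := by
  by_cases h : i = j
  · subst h; simp [x_self]
  · simp only [x_of i j h, stx]
    have := PresentedGroup.one_of_mem (rels := {w | StRels n B w}) (StRels.add i j h r s)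
    simp only [map_mul, map_inv] at this
    exact (mul_inv_eq_one.mp this).symm

lemma x_comm (i j h k : Fin n) (hjh : j ≠ h) (hik : i ≠ k) (r s : B) :
    Commute (x i j r) (x h k s) := by
  by_cases h1 : i = j
  · subst h1; rw [x_self]; exact Commute.one_left _
  by_cases h2 : h = k
  · subst h2; rw [x_self]; exact Commute.one_right _
  simp only [x_of i j h1, x_of h k h2, stx]
  have := PresentedGroup.one_of_mem (rels := {w | StRels n B w})
    (StRels.commZero i j h k h1 h2 hjh hik r s)
  rw [map_commutatorElement] at this
  exact commutatorElement_eq_one_iff_commute.mp this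

lemma x_mul (i j k : Fin n) (hij : i ≠ j) (hjk : j ≠ k) (hik : i ≠ k) (r s : B) :
    x i j r * x j k s = x i k (r * s) * x j k s * x i j r := by
  simp only [x_of i j hij, x_of j k hjk, x_of i k hik, stx]
  have := PresentedGroup.one_of_mem (rels := {w | StRels n B w})
    (StRels.commAdd i j k hij hjk hik r s)
  rw [map_mul, map_commutatorElement, map_inv, mul_inv_eq_one, commutatorElement_def] at this
  rw [← show _ = PresentedGroup.of _ from this]
  simp [PresentedGroup.of]

lemma x_zero (i j : Fin n) : x i j (0 : B) = 1 := by
  have := x_add i j (0 : B) 0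
  simpa using this

lemma x_neg (i j : Fin n) (r : B) : x i j (-r) = (x i j r)⁻¹ := by
  rw [eq_inv_iff_mul_eq_one, ← x_add]; simp [x_zero]

lemma vec_ind {M : Type} [AddCommMonoid M] {p : (Fin n → M) → Prop} (v : Fin n → M) (h0 : p 0)
    (hadd : ∀ v w, p v → p w → p (v + w))
    (hs : ∀ k, v k ≠ 0 → p (Pi.single k (v k))) : p v := by
  rw [← Finset.univ_sum_single v]
  refine Finset.sum_induction _ p hadd h0 ?_
  intro k _
  by_cases h : v k = 0
  · simpa [h] using h0
  · exact hs k h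

/-- one-parameter subgroup -/
def xHom (i j : Fin n) : Multiplicative B →* SteinbergGroup n B where
  toFun r := x i j r.toAdd
  map_one' := x_zero i j
  map_mul' r s := x_add i j _ _

def rowHom (i : Fin n) : (Fin n → Multiplicative B) →* SteinbergGroup n B :=
  MonoidHom.noncommPiCoprod (fun k => xHom i k) (by
    intro k l hkl a b
    change Commute (x i k _) (x i l _)
    by_cases h1 : k = i
    · subst h1; rw [x_self]; exact Commute.one_left _
    by_cases h2 : l = i
    · subst h2; rw [x_self]; exact Commute.one_right _
    exact x_comm _ _ _ _ h1 (Ne.symm h2) _ _)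

def colHom (i : Fin n) : (Fin n → Multiplicative B) →* SteinbergGroup n B :=
  MonoidHom.noncommPiCoprod (fun k => xHom k i) (by
    intro k l hkl a b
    change Commute (x k i _) (x l i _)
    by_cases h1 : k = i
    · subst h1; rw [x_self]; exact Commute.one_left _
    by_cases h2 : l = i
    · subst h2; rw [x_self]; exact Commute.one_right _
    exact x_comm _ _ _ _ (Ne.symm h2) h1 _ _)

def row (i : Fin n) (v : Fin n → B) : SteinbergGroup n B :=
  rowHom i (fun k => Multiplicative.ofAdd (v k))

def col (i : Fin n) (v : Fin n → B) : SteinbergGroup n B :=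
  colHom i (fun k => Multiplicative.ofAdd (v k))

lemma row_add (i : Fin n) (v w : Fin n → B) : row i (v + w) = row i v * row i w := by
  unfold row; rw [← map_mul]; rfl

lemma col_add (i : Fin n) (v w : Fin n → B) : col i (v + w) = col i v * col i w := by
  unfold col; rw [← map_mul]; rfl

lemma row_single (i k : Fin n) (r : B) : row i (Pi.single k r) = x i k r := by
  have : (fun l => Multiplicative.ofAdd ((Pi.single k r : Fin n → B) l)) =
      Pi.mulSingle k (Multiplicative.ofAdd r) := by
    funext l
    by_cases h : l = k
    · subst h; simp
    · simp [h]
  unfold row rowHom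
  rw [this]; exact MonoidHom.noncommPiCoprod_mulSingle _ _ _

lemma col_single (i k : Fin n) (r : B) : col i (Pi.single k r) = x k i r := by
  have : (fun l => Multiplicative.ofAdd ((Pi.single k r : Fin n → B) l)) =
      Pi.mulSingle k (Multiplicative.ofAdd r) := by
    funext l
    by_cases h : l = k
    · subst h; simp
    · simp [h]
  unfold col colHom
  rw [this]; exact MonoidHom.noncommPiCoprod_mulSingle _ _ _

lemma row_zero (i : Fin n) : row i (0 : Fin n → B) = 1 := by
  have := row_add i (0 : Fin n → B) 0
  simpa using this

lemma col_zero (i : Fin n) : col i (0 : Fin n → B) = 1 := by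
  have := col_add i (0 : Fin n → B) 0
  simpa using this

lemma row_neg (i : Fin n) (v : Fin n → B) : row i (-v) = (row i v)⁻¹ := by
  rw [eq_inv_iff_mul_eq_one, ← row_add]; simp [row_zero]

lemma col_neg (i : Fin n) (v : Fin n → B) : col i (-v) = (col i v)⁻¹ := by
  rw [eq_inv_iff_mul_eq_one, ← col_add]; simp [col_zero]


lemma swap_aux {G : Type} [Group G] {a b c : G} (h : a * b = c * b * a) (hca : Commute c a)
    (hcb : Commute c b) : b * a = a * c⁻¹ * b := by
  have h1 : b * a = c⁻¹ * (a * b) := by rw [h]; group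
  rw [h1, ← mul_assoc, hca.inv_left.eq]

lemma row_conj (i r s : Fin n) (hr : r ≠ i) (hs : s ≠ i) (hrs : r ≠ s) (t : B) (v : Fin n → B) :
    x r s t * row i v = row i (v + Pi.single s (-(t * v r))) * x r s t := by
  induction v using vec_ind with
  | h0 => simp [row_zero]
  | hadd v w hv hw =>
    rw [row_add, ← mul_assoc, hv, mul_assoc, hw, ← mul_assoc, ← row_add]
    congr 2
    simp only [Pi.add_apply, mul_add, neg_add, Pi.single_add]
    abel
  | hs k hk =>
    rename_i v
    by_cases h : k = r
    · subst h
      simp only [Pi.single_eq_same, row_add, row_single]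
      rw [x_neg, mul_comm t]
      exact swap_aux (x_mul i k s (Ne.symm hr) hrs (Ne.symm hs) (v k) t)
        (x_comm i s i k hs (Ne.symm hr) (v k * t) (v k))
        (x_comm i s k s (Ne.symm hrs) (Ne.symm hs) (v k * t) t)
    · rw [row_single, Pi.single_eq_of_ne (Ne.symm h)]
      simp only [mul_zero, neg_zero, Pi.single_zero, add_zero, row_single]
      exact (x_comm r s i k hs (Ne.symm h) t _).eq

lemma col_conj (i r s : Fin n) (hr : r ≠ i) (hs : s ≠ i) (hrs : r ≠ s) (t : B) (v : Fin n → B) :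
    x r s t * col i v = col i (v + Pi.single r (t * v s)) * x r s t := by
  induction v using vec_ind with
  | h0 => simp [col_zero]
  | hadd v w hv hw =>
    rw [col_add, ← mul_assoc, hv, mul_assoc, hw, ← mul_assoc, ← col_add]
    congr 2
    simp only [Pi.add_apply, mul_add, Pi.single_add]
    abel
  | hs k hk =>
    rename_i v
    by_cases h : k = s
    · subst h
      simp only [Pi.single_eq_same, col_add, col_single]
      rw [x_mul r k i hrs hs hr t (v k), (x_comm r i k i (Ne.symm hs) hr _ _).eq]
    · rw [col_single, Pi.single_eq_of_ne (Ne.symm h)]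
      simp only [mul_zero, Pi.single_zero, add_zero, col_single]
      exact (x_comm r s k i (Ne.symm h) hr t _).eq

lemma x_row_comm (i j : Fin n) (hij : i ≠ j) (t : B) (v : Fin n → B) :
    Commute (x i j t) (row i v) := by
  induction v using vec_ind with
  | h0 => rw [row_zero]; exact Commute.one_right _
  | hadd v w hv hw => rw [row_add]; exact hv.mul_right hw
  | hs k hk =>
    rw [row_single]
    by_cases h : i = k
    · subst h; rw [x_self]; exact Commute.one_right _
    · exact x_comm _ _ _ _ (Ne.symm hij) h _ _

lemma x_col_comm (i j : Fin n) (hij : i ≠ j) (t : B) (v : Fin n → B) :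
    Commute (x i j t) (col j v) := by
  induction v using vec_ind with
  | h0 => rw [col_zero]; exact Commute.one_right _
  | hadd v w hv hw => rw [col_add]; exact hv.mul_right hw
  | hs k hk =>
    rw [col_single]
    by_cases h : j = k
    · subst h; rw [x_self]; exact Commute.one_right _
    · exact x_comm _ _ _ _ h hij _ _


lemma row_row (i j : Fin n) (v w : Fin n → B) (hv : v j = 0) (hw : w i = 0) :
    Commute (row i v) (row j w) := by
  refine vec_ind (p := fun v => Commute (row i v) (row j w)) v ?_ ?_ ?_
  · rw [row_zero]; exact Commute.one_left _
  · intro v w hv hw; rw [row_add]; exact hv.mul_left hw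
  intro k hk
  have hkj : k ≠ j := by rintro rfl; exact hk hv
  refine vec_ind (p := fun w => Commute (row i (Pi.single k (v k))) (row j w)) w ?_ ?_ ?_
  · rw [row_zero]; exact Commute.one_right _
  · intro v w hv hw; rw [row_add]; exact hv.mul_right hw
  intro l hl
  have hli : l ≠ i := by rintro rfl; exact hl hw
  rw [row_single, row_single]
  exact x_comm _ _ _ _ hkj hli.symm _ _

lemma col_col (i j : Fin n) (v w : Fin n → B) (hv : v j = 0) (hw : w i = 0) :
    Commute (col i v) (col j w) := by
  refine vec_ind (p := fun v => Commute (col i v) (col j w)) v ?_ ?_ ?_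
  · rw [col_zero]; exact Commute.one_left _
  · intro v w hv hw; rw [col_add]; exact hv.mul_left hw
  intro k hk
  have hkj : k ≠ j := by rintro rfl; exact hk hv
  refine vec_ind (p := fun w => Commute (col i (Pi.single k (v k))) (col j w)) w ?_ ?_ ?_
  · rw [col_zero]; exact Commute.one_right _
  · intro v w hv hw; rw [col_add]; exact hv.mul_right hw
  intro l hl
  have hli : l ≠ i := by rintro rfl; exact hl hw
  rw [col_single, col_single]
  exact x_comm _ _ _ _ hli.symm hkj _ _

/-- `[x_{ji}(t), row_i v] = row_j (t v)` -/
lemma x_row (i j : Fin n) (hij : i ≠ j) (t : B) (v : Fin n → B) (hi : v i = 0) (hj : v j = 0) :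
    x j i t * row i v = row j (t • v) * row i v * x j i t := by
  refine (vec_ind (p := fun v => v i = 0 ∧ v j = 0 ∧
    x j i t * row i v = row j (t • v) * row i v * x j i t) v ?_ ?_ ?_).2.2
  · simp [row_zero]
  · rintro v w ⟨hvi, hvj, hv⟩ ⟨hwi, hwj, hw⟩
    refine ⟨by simp [hvi, hwi], by simp [hvj, hwj], ?_⟩
    rw [row_add, ← mul_assoc, hv, mul_assoc, hw, smul_add, row_add]
    have := row_row j i (t • w) v (by simp [hwi]) hvj
    simp only [← mul_assoc]
    rw [mul_assoc _ (row i v) (row j (t • w)), ← this.eq, ← mul_assoc]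
  · intro k hk
    have hki : k ≠ i := by rintro rfl; exact hk hi
    have hkj : k ≠ j := by rintro rfl; exact hk hj
    refine ⟨Pi.single_eq_of_ne hki.symm _, Pi.single_eq_of_ne hkj.symm _, ?_⟩
    rw [← Pi.single_smul, row_single, row_single, smul_eq_mul]
    exact x_mul j i k hij.symm hki.symm hkj.symm _ _

/-- `[col_i u, x_{ij}(t)] = col_j (t u)` -/
lemma col_x (i j : Fin n) (hij : i ≠ j) (t : B) (u : Fin n → B) (hi : u i = 0) (hj : u j = 0) :
    col i u * x i j t = col j (t • u) * x i j t * col i u := by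
  refine (vec_ind (p := fun u => u i = 0 ∧ u j = 0 ∧
    col i u * x i j t = col j (t • u) * x i j t * col i u) u ?_ ?_ ?_).2.2
  · simp [col_zero]
  · rintro v w ⟨hvi, hvj, hv⟩ ⟨hwi, hwj, hw⟩
    refine ⟨by simp [hvi, hwi], by simp [hvj, hwj], ?_⟩
    have := col_col i j v (t • w) (by simp [hvj]) (by simp [hwi])
    rw [col_add, mul_assoc, hw, smul_add, col_add]
    simp only [← mul_assoc]
    rw [this.eq, mul_assoc _ (col i v), hv]
    have := col_col j j (t • w) (t • v) (by simp [hwj]) (by simp [hvj])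
    simp only [← mul_assoc]
    rw [this.eq]
  · intro k hk
    have hki : k ≠ i := by rintro rfl; exact hk hi
    have hkj : k ≠ j := by rintro rfl; exact hk hj
    refine ⟨Pi.single_eq_of_ne hki.symm _, Pi.single_eq_of_ne hkj.symm _, ?_⟩
    rw [← Pi.single_smul, col_single, col_single, smul_eq_mul, mul_comm t]
    exact x_mul k i j hki hij hkj _ _

lemma row_col (i j : Fin n) (hij : i ≠ j) (v u : Fin n → B) (hu : u i = 0) (hv : v j = 0) :
    row j v * col i u = x j i (v ⬝ᵥ u) * col i u * row j v := by
  refine vec_ind (p := fun v => row j v * col i u = x j i (v ⬝ᵥ u) * col i u * row j v) v ?_ ?_ ?_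
  · simp [row_zero, x_zero]
  · intro v w hv hw
    rw [row_add, mul_assoc, hw, add_dotProduct, add_comm, x_add]
    simp only [← mul_assoc]
    rw [← (x_row_comm j i hij.symm _ v).eq, mul_assoc _ (row j v), hv]
    simp only [← mul_assoc]
  · intro k hk
    have hkj : k ≠ j := by rintro rfl; exact hk hv
    rw [row_single, single_dotProduct]
    by_cases hki : k = i
    · subst hki
      rw [hu, mul_zero, x_zero, one_mul]
      exact (x_col_comm j k hij.symm _ _).eq
    · rw [col_conj i j k hij.symm hki hkj.symm, add_comm, col_add, col_single]

lemma row_col_comm (i j : Fin n) (hij : i ≠ j) (v u : Fin n → B) (hu : u i = 0) (hv : v j = 0)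
    (h : v ⬝ᵥ u = 0) : Commute (row j v) (col i u) := by
  have := row_col i j hij v u hu hv
  rw [h, x_zero, one_mul] at this
  exact this

end basics
end TL

namespace TL

section comm
variable {n : ℕ} {B : Type} [CommRing B]

lemma hall_aux {G : Type} [Group G] {x y z p w : G} (h1 : x * y = p * y * x) (h2 : y * z = w * z * y)
    (hxz : Commute x z) (hyw : Commute y w) (hpw : Commute p w) (hwz : Commute w z) :
    ⁅p, z⁆ = ⁅x, w⁆ := by
  have hp : p = x * y * x⁻¹ * y⁻¹ := by rw [h1]; group
  have e1 : y⁻¹ * z = w⁻¹ * z * y⁻¹ := by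
    have : z * y⁻¹ = y⁻¹ * w * z := by
      have : z = y⁻¹ * w * z * y := by rw [mul_assoc, mul_assoc, ← mul_assoc w, ← h2]; group
      rw [eq_comm, ← eq_mul_inv_iff_mul_eq] at this
      exact this.symm
    rw [mul_assoc, this, ← mul_assoc, ← mul_assoc, ← hyw.inv_left.inv_right.eq]
    group
  have hc : Commute (p * y) w := hpw.mul_left hyw
  have hpy : p * y = x * y * x⁻¹ := by rw [h1]; group
  rw [hpy] at hc
  have key : ⁅p, z⁆ = w⁻¹ * x * w * x⁻¹ := by
    rw [commutatorElement_def]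
    have e2 : p * z = w⁻¹ * x * w * x⁻¹ * (z * p) := by
      calc p * z = x * y * x⁻¹ * (y⁻¹ * z) := by rw [hp]; group
        _ = (x * y * x⁻¹) * w⁻¹ * z * y⁻¹ := by rw [e1]; group
        _ = w⁻¹ * (x * y * x⁻¹) * z * y⁻¹ := by rw [hc.inv_right.eq]
        _ = w⁻¹ * x * y * (x⁻¹ * z) * y⁻¹ := by group
        _ = w⁻¹ * x * (y * z) * x⁻¹ * y⁻¹ := by rw [hxz.inv_left.eq]; group
        _ = w⁻¹ * x * w * z * (y * x⁻¹ * y⁻¹) := by rw [h2]; group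
        _ = w⁻¹ * x * w * (z * x⁻¹) * p := by rw [hp]; group
        _ = w⁻¹ * x * w * (x⁻¹ * z) * p := by rw [hxz.inv_left.eq]
        _ = _ := by group
    rw [e2]; group
  have hcw : Commute w ⁅p, z⁆ := by
    rw [commutatorElement_def]
    exact ((hpw.symm.mul_right hwz).mul_right hpw.symm.inv_right).mul_right hwz.inv_right
  have : ⁅p, z⁆ = w * ⁅p, z⁆ * w⁻¹ := by rw [hcw.eq]; group
  rw [this, key, commutatorElement_def]; group

lemma commute_commutator {G : Type} [Group G] {a b c : G} (h1 : Commute a b) (h2 : Commute a c) :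
    Commute a ⁅b, c⁆ := by
  rw [commutatorElement_def]
  exact ((h1.mul_right h2).mul_right h1.inv_right).mul_right h2.inv_right

/-- `M_i(u,v) = [col_i u, row_i v]` -/
def M (i : Fin n) (u v : Fin n → B) : SteinbergGroup n B := ⁅col i u, row i v⁆

lemma M_swap (i j : Fin n) (hij : i ≠ j) (s : B) (u v : Fin n → B) (hui : u i = 0) (huj : u j = 0)
    (hvi : v i = 0) (hvj : v j = 0) (h : v ⬝ᵥ u = 0) :
    M i (s • u) v = M j u (s • v) := by
  refine hall_aux (y := x j i s) (col_x j i hij.symm s u huj hui) (x_row i j hij s v hvi hvj)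
    ?_ ?_ ?_ ?_
  · exact (row_col_comm j i hij.symm v u huj hvi h).symm
  · exact x_row_comm j i hij.symm _ _
  · exact (row_col_comm i j hij (s • v) (s • u) (by simp [hui]) (by simp [hvj]) (by simp [h])).symm
  · exact row_row j i _ _ (by simp [hvi]) hvj

lemma M_swap1 (i j : Fin n) (hij : i ≠ j) (u v : Fin n → B) (hui : u i = 0) (huj : u j = 0)
    (hvi : v i = 0) (hvj : v j = 0) (h : v ⬝ᵥ u = 0) :
    M i u v = M j u v := by
  simpa using M_swap i j hij 1 u v hui huj hvi hvj h

lemma M_row_comm' (i j : Fin n) (hij : i ≠ j) (u v w : Fin n → B) (hui : u i = 0)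
    (hvj : v j = 0) (hwi : w i = 0) (hwj : w j = 0)
    (hw : w ⬝ᵥ u = 0) : Commute (row j w) (M i u v) :=
  commute_commutator (row_col_comm i j hij w u hui hwj hw) (row_row j i w v hwi hvj)

/-- zero out two coordinates -/
def z2 (i j : Fin n) (u : Fin n → B) : Fin n → B := fun k => if k = i ∨ k = j then 0 else u k

lemma z2_i (i j : Fin n) (u : Fin n → B) : z2 i j u i = 0 := by simp [z2]
lemma z2_j (i j : Fin n) (u : Fin n → B) : z2 i j u j = 0 := by simp [z2]
lemma z2_symm (i j : Fin n) (u : Fin n → B) : z2 i j u = z2 j i u := by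
  funext k; simp [z2, or_comm]
lemma z2_smul (i j : Fin n) (s : B) (u : Fin n → B) : z2 i j (s • u) = s • z2 i j u := by
  funext k; simp [z2]
lemma z2_decomp (i j : Fin n) (hij : i ≠ j) (u : Fin n → B) :
    u = z2 i j u + Pi.single i (u i) + Pi.single j (u j) := by
  funext k
  by_cases h1 : k = i
  · subst h1; simp [z2, hij]
  · by_cases h2 : k = j
    · subst h2; simp [z2, h1]
    · simp [z2, h1, h2]

lemma dot_z2 (i j : Fin n) (hij : i ≠ j) (u v : Fin n → B) :
    v ⬝ᵥ u = v ⬝ᵥ z2 i j u + v i * u i + v j * u j := by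
  conv_lhs => rw [z2_decomp i j hij u]
  simp [dotProduct_add]

lemma M_split (i j : Fin n) (hij : i ≠ j) (u v : Fin n → B)
    (hvi : v i = 0) (hvj : v j = 0) (h : v ⬝ᵥ u = 0) :
    M i u v = row j (u j • v) * M i (z2 i j u) v := by
  have hd : v ⬝ᵥ z2 i j u = 0 := by
    have := dot_z2 i j hij u v
    simpa [h, hvi, hvj] using this.symm
  have e : col i u = col i (z2 i j u) * x j i (u j) := by
    conv_lhs => rw [z2_decomp i j hij u, col_add, col_add, col_single, col_single, x_self, mul_one]
  have c := row_col_comm i j hij (u j • v) (z2 i j u) (z2_i _ _ _) (by simp [hvj]) (by simp [hd])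
  have e2 := x_row i j hij (u j) v hvi hvj
  unfold M
  rw [commutatorElement_def, commutatorElement_def, e, mul_assoc (col i _), e2]
  rw [← mul_assoc, ← mul_assoc, ← c.eq]
  group

lemma M_row_comm (i j : Fin n) (hij : i ≠ j) (u v w : Fin n → B)
    (hvi : v i = 0) (hvj : v j = 0) (hwi : w i = 0) (h : v ⬝ᵥ u = 0) (hw : w ⬝ᵥ u = 0) :
    Commute (row i w) (M i u v) := by
  have hd : v ⬝ᵥ z2 i j u = 0 := by
    have := dot_z2 i j hij u v
    simpa [h, hvi, hvj] using this.symm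
  have hwd : w ⬝ᵥ z2 i j u = - (w j * u j) := by
    have := dot_z2 i j hij u w
    rw [hw, hwi] at this
    linear_combination -this
  rw [M_split i j hij u v hvi hvj h,
    M_swap1 i j hij _ v (z2_i _ _ _) (z2_j _ _ _) hvi hvj hd]
  have ew : row i w = row i (z2 i j w) * x i j (w j) := by
    conv_lhs => rw [z2_decomp i j hij w, row_add, row_add, row_single, row_single, x_self, mul_one]
  -- conj of row_j
  have conjrow : ∀ t : B, row i w * row j (t • v) = row i ((w j * t) • v) * row j (t • v) * row i w := by
    intro t
    have c1 := row_row i j (z2 i j w) (t • v) (z2_j _ _ _) (by simp [hvi])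
    have c2 := row_row i i (z2 i j w) ((w j * t) • v) (z2_i _ _ _) (by simp [hvi])
    rw [ew, mul_assoc, x_row j i hij.symm (w j) (t • v) (by simp [hvj]) (by simp [hvi]), smul_smul]
    simp only [← mul_assoc]
    rw [c2.eq, mul_assoc _ (row i (z2 i j w)), c1.eq, ← mul_assoc]
  have conjcol : row i w * col j (z2 i j u) = x i j (-(w j * u j)) * col j (z2 i j u) * row i w := by
    rw [← hwd]
    exact row_col j i hij.symm w _ (z2_j _ _ _) hwi
  -- main
  set a := row i w
  set c := col j (z2 i j u) with hc
  set ξ := x i j (-(w j * u j)) with hξ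
  set ρ := row i (w j • v) with hρ
  set r := row j v with hr
  have h1 : a * r = ρ * r * a := by simpa using conjrow 1
  have hρξ : Commute ρ ξ := (x_row_comm i j hij _ _).symm
  have hρc : Commute ρ c := row_col_comm j i hij.symm _ _ (z2_j _ _ _) (by simp [hvi]) (by simp [hd])
  have hρr : Commute ρ r := row_row i j _ _ (by simp [hvj]) hvi
  have hcξ : Commute ξ c := x_col_comm i j hij _ _
  set τ := row i ((-(w j * u j)) • v) with hτ
  have hξr : ξ * r = τ * r * ξ := x_row j i hij.symm _ v hvj hvi
  have hτc : Commute τ c := row_col_comm j i hij.symm _ _ (z2_j _ _ _) (by simp [hvi]) (by simp [hd])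
  have h2 : a * row j (u j • v) = τ⁻¹ * row j (u j • v) * a := by
    have := conjrow (u j)
    rw [this, hτ, ← row_neg]
    congr 3
    funext k; simp
  have hτR : Commute τ (row j (u j • v)) := row_row i j _ _ (by simp [hvj]) (by simp [hvi])
  have K : a * ⁅c, r⁆ * a⁻¹ = τ * ⁅c, r⁆ := by
    have e1 : a * ⁅c, r⁆ * a⁻¹ = ⁅a * c * a⁻¹, a * r * a⁻¹⁆ := by
      simp only [commutatorElement_def]; group
    rw [e1, conjcol, h1]
    rw [mul_inv_cancel_right, mul_inv_cancel_right]
    have e2 : ⁅ξ * c, ρ * r⁆ = ⁅ξ * c, r⁆ := by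
      have : Commute ρ ⁅ξ * c, r⁆ := commute_commutator (hρξ.mul_right hρc) hρr
      have hh := (hρξ.mul_right hρc)
      calc ⁅ξ * c, ρ * r⁆ = (ξ * c * ρ) * r * (ξ * c)⁻¹ * r⁻¹ * ρ⁻¹ := by
            simp only [commutatorElement_def]; group
        _ = ρ * ⁅ξ * c, r⁆ * ρ⁻¹ := by rw [← hh.eq]; simp only [commutatorElement_def]; group
        _ = _ := by rw [this.eq]; group
    rw [e2, hcξ.eq]
    have e3 : ⁅c * ξ, r⁆ = c * (ξ * r) * ξ⁻¹ * c⁻¹ * r⁻¹ := by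
      simp only [commutatorElement_def]; group
    rw [e3, hξr, ← mul_assoc, ← mul_assoc, ← hτc.eq]
    simp only [commutatorElement_def]; group
  have K' : a * ⁅c, r⁆ = τ * ⁅c, r⁆ * a := by rw [← K]; group
  change a * (row j (u j • v) * ⁅c, r⁆) = row j (u j • v) * ⁅c, r⁆ * a
  rw [← mul_assoc, h2, mul_assoc _ a, K', hτR.inv_left.eq]
  group

/-- `X^i(u,v)` -/
def X (i : Fin n) (u v : Fin n → B) : SteinbergGroup n B := M i u v * row i (u i • v)

lemma X_split (i j : Fin n) (hij : i ≠ j) (u v : Fin n → B)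
    (hvi : v i = 0) (hvj : v j = 0) (h : v ⬝ᵥ u = 0) :
    X i u v = row j (u j • v) * M i (z2 i j u) v * row i (u i • v) := by
  rw [X, M_split i j hij u v hvi hvj h]

lemma X_indep (i j : Fin n) (u v : Fin n → B)
    (hvi : v i = 0) (hvj : v j = 0) (h : v ⬝ᵥ u = 0) : X i u v = X j u v := by
  by_cases hij : i = j
  · rw [hij]
  have hd : v ⬝ᵥ z2 i j u = 0 := by
    have := dot_z2 i j hij u v
    simpa [h, hvi, hvj] using this.symm
  have c1 := M_row_comm' i j hij (z2 i j u) v (u j • v) (z2_i _ _ _) hvj (by simp [hvi])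
    (by simp [hvj]) (by simp [hd])
  have c2 := M_row_comm' j i (Ne.symm hij) (z2 i j u) v (u i • v) (z2_j _ _ _) hvi
     (by simp [hvj]) (by simp [hvi]) (by simp [hd])
  have e := M_swap1 i j hij (z2 i j u) v (z2_i _ _ _) (z2_j _ _ _) hvi hvj hd
  have c3 := row_row i j (u i • v) (u j • v) (by simp [hvj]) (by simp [hvi])
  rw [X_split i j hij u v hvi hvj h, X_split j i (Ne.symm hij) u v hvj hvi h, ← z2_symm i j, ← e]
  rw [← e] at c2
  rw [mul_assoc, ← c2.eq, ← mul_assoc, ← c3.eq, mul_assoc, c1.eq, ← mul_assoc]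

lemma X_add (i j : Fin n) (hij : i ≠ j) (u v w : Fin n → B)
    (hvi : v i = 0) (hwi : w i = 0) (hwj : w j = 0) (h : v ⬝ᵥ u = 0) (hw : w ⬝ᵥ u = 0) :
    X i u (v + w) = X i u v * X i u w := by
  have c1 := M_row_comm i j hij u w v hwi hwj hvi hw h
  have c2 := M_row_comm i j hij u w (u i • v) hwi hwj (by simp [hvi]) hw (by simp [h])
  have e : M i u (v + w) = M i u v * M i u w := by
    have : M i u (v + w) = M i u v * (row i v * M i u w * (row i v)⁻¹) := by
      unfold M; rw [row_add]; simp only [commutatorElement_def]; group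
    rw [this, c1.eq]; group
  unfold X
  rw [e, smul_add, row_add, mul_assoc, ← mul_assoc (M i u w), ← c2.eq]
  group

lemma X_smul (i j : Fin n) (hij : i ≠ j) (s : B) (u v : Fin n → B)
    (hvi : v i = 0) (hvj : v j = 0) (h : v ⬝ᵥ u = 0) : X i (s • u) v = X i u (s • v) := by
  have hd : v ⬝ᵥ z2 i j u = 0 := by
    have := dot_z2 i j hij u v
    simpa [h, hvi, hvj] using this.symm
  rw [X_split i j hij (s • u) v hvi hvj (by simp [h]),
    X_split i j hij u (s • v) (by simp [hvi]) (by simp [hvj]) (by simp [h]), z2_smul,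
    M_swap i j hij s _ v (z2_i _ _ _) (z2_j _ _ _) hvi hvj hd,
    M_swap1 i j hij _ (s • v) (z2_i _ _ _) (z2_j _ _ _) (by simp [hvi]) (by simp [hvj]) (by simp [hd])]
  simp only [Pi.smul_apply, smul_smul, smul_eq_mul, mul_comm s]

lemma X_zero (i : Fin n) (u : Fin n → B) : X i u 0 = 1 := by
  simp [X, M, row_zero]

lemma X_conj (i r s : Fin n) (hr : r ≠ i) (hs : s ≠ i) (hrs : r ≠ s) (t : B) (u v : Fin n → B) :
    x r s t * X i u v * (x r s t)⁻¹ =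
      X i (u + Pi.single r (t * u s)) (v + Pi.single s (-(t * v r))) := by
  have e1 := eq_mul_inv_of_mul_eq (row_conj i r s hr hs hrs t v).symm
  have e2 := eq_mul_inv_of_mul_eq (col_conj i r s hr hs hrs t u).symm
  have e3 := eq_mul_inv_of_mul_eq (row_conj i r s hr hs hrs t (u i • v)).symm
  have e4 : (u + Pi.single r (t * u s) : Fin n → B) i = u i := by simp [hr.symm]
  have e5 : u i • (v + Pi.single s (-(t * v r))) = u i • v + Pi.single s (-(t * (u i • v) r)) := by
    rw [smul_add, ← Pi.single_smul]
    congr 2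
    simp; ring
  unfold X M
  rw [e4, e5, e1, e2, e3]
  simp only [commutatorElement_def]; group

end comm
end TL

namespace TL

section kap
variable {n : ℕ} {B : Type} [CommRing B]

def kap (u : Fin n → B) (k l : Fin n) (c : B) : Fin n → B :=
  Pi.single k (c * u l) + Pi.single l (-(c * u k))

lemma kap_dot (u : Fin n → B) (k l : Fin n) (c : B) : kap u k l c ⬝ᵥ u = 0 := by
  simp only [kap, add_dotProduct, single_dotProduct]; ring

lemma kap_ne (u : Fin n → B) (k l i : Fin n) (c : B) (hk : i ≠ k) (hl : i ≠ l) :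
    kap u k l c i = 0 := by
  simp [kap, hk, hl]

lemma kap_add (u : Fin n → B) (k l : Fin n) (c d : B) :
    kap u k l (c + d) = kap u k l c + kap u k l d := by
  simp only [kap, add_mul, neg_add, Pi.single_add]; abel

lemma kap_symm (u : Fin n → B) (k l : Fin n) (c : B) : kap u l k c = kap u k l (-c) := by
  simp only [kap, neg_mul, neg_neg]; abel

lemma kap_self (u : Fin n → B) (k : Fin n) (c : B) : kap u k k c = 0 := by
  simp only [kap, Pi.single_neg]; abel

lemma kap_zero (u : Fin n → B) (k l : Fin n) : kap u k l (0 : B) = 0 := by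
  simp [kap]

lemma kap_smul (u : Fin n → B) (k l : Fin n) (c s : B) : kap u k l (s * c) = s • kap u k l c := by
  simp only [kap, smul_add, ← Pi.single_smul, smul_eq_mul]
  congr 2 <;> ring

lemma kap_smul' (u : Fin n → B) (k l : Fin n) (c s : B) : kap (s • u) k l c = s • kap u k l c := by
  simp only [kap, smul_add, ← Pi.single_smul, smul_eq_mul, Pi.smul_apply]
  congr 2 <;> ring

end kap

section kos
variable {n : ℕ} [hn : Fact (4 ≤ n)] {B : Type} [CommRing B]

lemma exists_oth (k l m : Fin n) : ∃ i, i ≠ k ∧ i ≠ l ∧ i ≠ m := by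
  have h4 := hn.out
  have : ({k, l, m} : Finset (Fin n)).card < (Finset.univ : Finset (Fin n)).card := by
    have := Finset.card_le_three (a := k) (b := l) (c := m)
    simp only [Finset.card_univ, Fintype.card_fin]; omega
  obtain ⟨i, -, hi⟩ := Finset.exists_mem_notMem_of_card_lt_card this
  simp only [Finset.mem_insert, Finset.mem_singleton, not_or] at hi
  exact ⟨i, hi⟩

noncomputable def oth (k l : Fin n) : Fin n := (exists_oth k l l).choose

lemma oth_k (k l : Fin n) : oth k l ≠ k := (exists_oth k l l).choose_spec.1
lemma oth_l (k l : Fin n) : oth k l ≠ l := (exists_oth k l l).choose_spec.2.1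

/-- Koszul elements -/
noncomputable def Xe (u : Fin n → B) (k l : Fin n) (c : B) : SteinbergGroup n B :=
  X (oth k l) u (kap u k l c)

lemma Xe_eq (u : Fin n → B) (k l : Fin n) (c : B) (i : Fin n) (hk : i ≠ k) (hl : i ≠ l) :
    Xe u k l c = X i u (kap u k l c) :=
  X_indep _ _ _ _ (kap_ne _ _ _ _ _ (oth_k _ _) (oth_l _ _)) (kap_ne _ _ _ _ _ hk hl) (kap_dot _ _ _ _)

lemma X_kap_add (u v : Fin n → B) (k l : Fin n) (c : B) (i : Fin n) (hk : i ≠ k) (hl : i ≠ l)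
    (hv : v i = 0) (h : v ⬝ᵥ u = 0) : X i u (v + kap u k l c) = X i u v * Xe u k l c := by
  obtain ⟨j, hj1, hj2, hj3⟩ := exists_oth k l i
  rw [X_add i j hj3.symm u v _ hv (kap_ne _ _ _ _ _ hk hl) (kap_ne _ _ _ _ _ hj1 hj2) h
    (kap_dot _ _ _ _), Xe_eq u k l c i hk hl]

lemma Xe_add (u : Fin n → B) (k l : Fin n) (c d : B) :
    Xe u k l (c + d) = Xe u k l c * Xe u k l d := by
  rw [Xe_eq u k l (c + d) _ (oth_k k l) (oth_l k l), kap_add,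
    X_kap_add _ _ _ _ _ _ (oth_k k l) (oth_l k l) (kap_ne _ _ _ _ _ (oth_k _ _) (oth_l _ _))
      (kap_dot _ _ _ _)]
  rfl

lemma Xe_zero (u : Fin n → B) (k l : Fin n) : Xe u k l 0 = 1 := by
  rw [Xe, kap_zero, X_zero]

lemma Xe_neg (u : Fin n → B) (k l : Fin n) (c : B) : Xe u k l (-c) = (Xe u k l c)⁻¹ := by
  rw [eq_inv_iff_mul_eq_one, ← Xe_add]; simp [Xe_zero]

lemma Xe_self (u : Fin n → B) (k : Fin n) (c : B) : Xe u k k c = 1 := by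
  rw [Xe, kap_self, X_zero]

lemma Xe_symm (u : Fin n → B) (k l : Fin n) (c : B) : Xe u l k c = Xe u k l (-c) := by
  rw [Xe_eq u l k c _ (oth_l k l) (oth_k k l), kap_symm]; rfl

lemma Xe_smul (u : Fin n → B) (k l : Fin n) (c s : B) : Xe (s • u) k l c = Xe u k l (s * s * c) := by
  obtain ⟨j, hj1, hj2, hj3⟩ := exists_oth k l (oth k l)
  rw [Xe, Xe, X_smul _ j hj3.symm _ _ _ (kap_ne _ _ _ _ _ (oth_k _ _) (oth_l _ _))
    (kap_ne _ _ _ _ _ hj1 hj2), kap_smul', ← kap_smul, ← kap_smul, mul_assoc]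
  rw [kap_smul', smul_dotProduct, kap_dot, smul_zero]

lemma Xe_koszul (u : Fin n → B) (k l m : Fin n) (d : B) :
    Xe u k l (d * u m) * Xe u l m (d * u k) * Xe u m k (d * u l) = 1 := by
  obtain ⟨i, hk, hl, hm⟩ := exists_oth k l m
  rw [Xe_eq u k l _ i hk hl, ← X_kap_add _ _ _ _ _ i hl hm (kap_ne _ _ _ _ _ hk hl) (kap_dot _ _ _ _),
    ← X_kap_add _ _ _ _ _ i hm hk, ← X_zero i u]
  · congr 1
    simp only [kap, Pi.single_neg]
    rw [show d * u k * u m = d * u m * u k by ring, show d * u l * u k = d * u k * u l by ring,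
      show d * u l * u m = d * u m * u l by ring]
    abel
  · simp [kap_ne, hk, hl, hm]
  · simp [add_dotProduct, kap_dot]

lemma Xe_comm_of (u : Fin n → B) (k l p q i : Fin n) (c d : B) (hk : i ≠ k) (hl : i ≠ l)
    (hp : i ≠ p) (hq : i ≠ q) : Commute (Xe u k l c) (Xe u p q d) := by
  have e1 := X_kap_add u (kap u k l c) p q d i hp hq (kap_ne _ _ _ _ _ hk hl) (kap_dot _ _ _ _)
  have e2 := X_kap_add u (kap u p q d) k l c i hk hl (kap_ne _ _ _ _ _ hp hq) (kap_dot _ _ _ _)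
  rw [← Xe_eq u _ _ _ i hk hl] at e1
  rw [← Xe_eq u _ _ _ i hp hq] at e2
  rw [Commute, SemiconjBy, ← e1, ← e2, add_comm]

lemma Xe_E0 (u : Fin n → B) (k l r s : Fin n) (t c : B) (hrs : r ≠ s) (hk : r ≠ k) (hl : r ≠ l) :
    MulAut.conj (x r s t) (Xe u k l c) = Xe (u + Pi.single r (t * u s)) k l c := by
  have hkap : kap (u + Pi.single r (t * u s)) k l c = kap u k l c := by
    simp [kap, hk.symm, hl.symm]
  rw [MulAut.conj_apply]
  by_cases hs : s = k ∨ s = l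
  · obtain ⟨i, ik, il, ir⟩ := exists_oth k l r
    have is : s ≠ i := by rcases hs with rfl | rfl <;> [exact ik.symm; exact il.symm]
    rw [Xe_eq u k l c i ik il, Xe_eq _ k l c i ik il, X_conj i r s ir.symm is hrs, hkap,
      kap_ne u k l r c hk hl]
    simp
  · push Not at hs
    rw [Xe_eq u k l c r hk hl, Xe_eq _ k l c r hk hl, hkap]
    have hvr := kap_ne u k l r c hk hl
    have hvs := kap_ne u k l s c hs.1 hs.2
    have hvu := kap_dot u k l c
    have hvu' := kap_dot (u + Pi.single r (t * u s)) k l c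
    rw [hkap] at hvu'
    set v := kap u k l c
    rw [X_split r s hrs u v hvr hvs hvu, X_split r s hrs _ v hvr hvs hvu']
    have hz : z2 r s (u + Pi.single r (t * u s)) = z2 r s u := by
      funext i; by_cases h : i = r <;> simp [z2, h]
    have hd : v ⬝ᵥ z2 r s u = 0 := by
      have := dot_z2 r s hrs u v
      simpa [hvu, hvr, hvs] using this.symm
    rw [hz]
    set z := z2 r s u with hzz
    have e1 := x_row s r hrs.symm t (u s • v) (by simp [hvs]) (by simp [hvr])
    have c1 : Commute (x r s t) (row r (u r • v)) := x_row_comm r s hrs _ _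
    have c2 : Commute (x r s t) (M r z v) := by
      have d1 := row_col_comm s r hrs.symm v (t • z) (by simp [hzz, z2_j]) hvr (by simp [hd])
      have d2 := x_col_comm r s hrs t (t • z)
      have d3 := col_col r s z (t • z) (by simp [hzz, z2_j]) (by simp [hzz, z2_i])
      have d4 := x_row_comm r s hrs t v
      have d5 := col_x r s hrs t z (by simp [hzz, z2_i]) (by simp [hzz, z2_j])
      set C := col s (t • z)
      have dC : Commute C (M r z v) := commute_commutator d3.symm d1.symm
      have : Commute (C * x r s t) (M r z v) := by
        have e : x r s t * col r z * (x r s t)⁻¹ = C⁻¹ * col r z := by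
          have : x r s t * col r z = C⁻¹ * (col r z * x r s t) := by rw [d5]; group
          rw [this]; group
        have e' : x r s t * M r z v * (x r s t)⁻¹ = C⁻¹ * M r z v * C := by
          have a1 : x r s t * M r z v * (x r s t)⁻¹ =
            ⁅x r s t * col r z * (x r s t)⁻¹, x r s t * row r v * (x r s t)⁻¹⁆ := by
              unfold M; simp only [commutatorElement_def]; group
          rw [a1, e, d4.eq, mul_inv_cancel_right]
          unfold M
          have : ⁅C⁻¹ * col r z, row r v⁆ = C⁻¹ * (col r z * (row r v * (col r z)⁻¹ * (C * (row r v)⁻¹))) := by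
            simp only [commutatorElement_def]; group
          rw [this, ← d1.inv_left.eq]
          simp only [commutatorElement_def]; group
        rw [mul_assoc, ← dC.inv_left.eq.symm] at e'
        have e'' : x r s t * M r z v = M r z v * x r s t := by
          have := dC.eq
          calc x r s t * M r z v = (x r s t * (M r z v * (x r s t)⁻¹)) * x r s t := by group
            _ = _ := by rw [e']; group
        exact dC.mul_left e''
      have h3 := dC.inv_left.mul_left this
      simpa using h3
    have c3 : Commute (row r ((t * u s) • v)) (M r z v) :=
      M_row_comm r s hrs z v _ hvr hvs (by simp [hvr]) hd (by simp [hd])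
    have c4 : Commute (row r ((t * u s) • v)) (row s (u s • v)) :=
      row_row r s _ _ (by simp [hvs]) (by simp [hvr])
    rw [smul_smul] at e1
    have e5 : (u + Pi.single r (t * u s) : Fin n → B) r = t * u s + u r := by simp [add_comm]
    have e6 : (u + Pi.single r (t * u s) : Fin n → B) s = u s := by simp [hrs.symm]
    rw [e5, e6, add_smul, row_add]
    calc _ = (x r s t * row s (u s • v)) * M r z v * row r (u r • v) * (x r s t)⁻¹ := by group
      _ = row r ((t * u s) • v) * row s (u s • v) * (x r s t * M r z v) * row r (u r • v) * (x r s t)⁻¹ := by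
        rw [e1]; group
      _ = row r ((t * u s) • v) * row s (u s • v) * M r z v * (x r s t * row r (u r • v)) * (x r s t)⁻¹ := by
        rw [c2.eq]; group
      _ = row r ((t * u s) • v) * row s (u s • v) * M r z v * row r (u r • v) := by
        rw [c1.eq]; group
      _ = _ := by rw [c4.eq, mul_assoc (row s _), c3.eq]; group

lemma Xe_E1 (u : Fin n → B) (k l s : Fin n) (t c : B) (hks : k ≠ s) (hkl : k ≠ l) :
    MulAut.conj (x k s t) (Xe u k l c) = Xe (u + Pi.single k (t * u s)) k l c *
      Xe (u + Pi.single k (t * u s)) s l (-(t * c)) := by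
  obtain ⟨i, ik, il, is⟩ := exists_oth k l s
  rw [MulAut.conj_apply, Xe_eq u k l c i ik il, X_conj i k s ik.symm is.symm hks,
    Xe_eq _ k l c i ik il, ← X_kap_add _ _ s l _ i is il (kap_ne _ _ _ _ _ ik il) (kap_dot _ _ _ _)]
  congr 1
  simp only [kap, Pi.add_apply, Pi.single_eq_same, Pi.single_eq_of_ne hkl.symm,
    Pi.single_eq_of_ne hkl, Pi.single_eq_of_ne hks.symm, add_zero]
  rw [add_assoc, add_assoc]
  congr 1
  rw [add_left_comm, ← Pi.single_add, add_comm]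
  congr 2 <;> ring

end kos
end TL

namespace TL

section comm
variable {n : ℕ} {B : Type} [CommRing B]

lemma row_two (p k l : Fin n) (α β : B) :
    row p (Pi.single k α + Pi.single l β) = x p k α * x p l β := by
  rw [row_add, row_single, row_single]

lemma single_cancel (u : Fin n → B) (p : Fin n) (a b : B) (h : a + b = 0) :
    u + Pi.single p a + Pi.single p b = u := by
  rw [add_assoc, ← Pi.single_add, h, Pi.single_zero, add_zero]

variable [hn : Fact (4 ≤ n)]

lemma Xe_A (u : Fin n → B) (k l p q : Fin n) (α β d : B) (pk : p ≠ k) (pl : p ≠ l) (pq : p ≠ q)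
    (h : α * u k + β * u l = 0) :
    MulAut.conj (x p k α * x p l β) (Xe u p q d) =
      Xe u p q d * Xe u k q (-(α * d)) * Xe u l q (-(β * d)) := by
  have e1 := Xe_E1 u p q l β d pl pq
  have e2 := Xe_E1 (u + Pi.single p (β * u l)) p q k α d pk pq
  have e4 : (u + Pi.single p (β * u l) : Fin n → B) k = u k := by simp [pk.symm]
  have e5 := single_cancel u p (β * u l) (α * u k) (by rw [add_comm, h])
  rw [e4, e5] at e2
  rw [map_mul, MulAut.mul_apply, e1, map_mul, e2]
  by_cases lq : l = q
  · subst lq; simp [Xe_self]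
  · have e3 := Xe_E0 (u + Pi.single p (β * u l)) l q p k α (-(β * d)) pk pl pq
    rw [e4, e5] at e3
    rw [e3]

lemma Xe_E0' (u : Fin n → B) (k l p : Fin n) (α β c : B) (pk : p ≠ k) (pl : p ≠ l)
    (h : α * u k + β * u l = 0) :
    MulAut.conj (x p k α * x p l β) (Xe u k l c) = Xe u k l c := by
  have e4 : (u + Pi.single p (β * u l) : Fin n → B) k = u k := by simp [pk.symm]
  have e5 := single_cancel u p (β * u l) (α * u k) (by rw [add_comm, h])
  rw [map_mul, MulAut.mul_apply, Xe_E0 u k l p l β c pl pk pl, Xe_E0 _ k l p k α c pk pk pl, e4, e5]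

lemma koszul' (u : Fin n → B) (k l q : Fin n) (D : B) :
    Xe u k q (-(D * u l)) * Xe u l q (D * u k) = Xe u k l (-(D * u q)) := by
  obtain ⟨i, hk, hl, hq⟩ := exists_oth k l q
  have := Xe_koszul u q k l D
  rw [Xe_symm u k q, (Xe_comm_of u k q k l i _ _ hk hq hk hl).eq] at this
  rw [Xe_neg u k l, eq_inv_iff_mul_eq_one]
  rw [mul_assoc] at this
  rw [mul_eq_one_iff_eq_inv.1 this, mul_inv_cancel]

lemma Xe_A' (u : Fin n → B) (k l p q : Fin n) (e d : B) (pk : p ≠ k) (pl : p ≠ l) (pq : p ≠ q) :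
    MulAut.conj (row p (kap u k l e)) (Xe u p q d) = Xe u p q d * Xe u k l (-(e * d * u q)) := by
  rw [kap, row_two, Xe_A u k l p q _ _ d pk pl pq (by ring), mul_assoc, ← koszul']
  congr 3 <;> ring

lemma Xe_A2 (u : Fin n → B) (k l p q : Fin n) (e d : B) (qk : q ≠ k) (ql : q ≠ l) (pq : p ≠ q) :
    MulAut.conj (row q (kap u k l e)) (Xe u p q d) = Xe u p q d * Xe u k l (e * d * u p) := by
  rw [Xe_symm u q p d, Xe_A' u k l q p e _ qk ql pq.symm]
  congr 2; ring

lemma Xe_row_fix (u : Fin n → B) (k l p : Fin n) (e c : B) (pk : p ≠ k) (pl : p ≠ l) :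
    MulAut.conj (row p (kap u k l e)) (Xe u k l c) = Xe u k l c := by
  rw [kap, row_two, Xe_E0' u k l p _ _ c pk pl (by ring)]

lemma conj_commute {G : Type} [Group G] {a b : G} : MulAut.conj a b = b ↔ Commute a b := by
  rw [MulAut.conj_apply, mul_inv_eq_iff_eq_mul]; rfl

lemma Xe_disj (u : Fin n → B) (k l p q : Fin n) (c d : B) (kl : k ≠ l) (pk : p ≠ k) (pl : p ≠ l)
    (qk : q ≠ k) (ql : q ≠ l) (pq : p ≠ q) (hall : ∀ i, i = k ∨ i = l ∨ i = p ∨ i = q) :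
    Commute (Xe u k l c) (Xe u p q d) := by
  set Y := Xe u p q d with hY
  set v := kap u k l c with hv
  have hvp := kap_ne u k l p c pk pl
  have hvq := kap_ne u k l q c qk ql
  have hz : z2 p q u = Pi.single k (u k) + Pi.single l (u l) := by
    funext i
    rcases hall i with rfl | rfl | rfl | rfl <;> simp [z2, pk, pl, qk, ql, pk.symm, pl.symm, qk.symm, ql.symm, kl, kl.symm]
  have hX : Xe u k l c = row q (u q • v) * M p (z2 p q u) v * row p (u p • v) := by
    rw [Xe_eq u k l c p pk pl, X_split p q pq u v hvp hvq (kap_dot _ _ _ _)]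
  have cq : ∀ f, Commute (row q (u q • v)) (Xe u k l f) := fun f => by
    rw [hv, ← kap_smul, ← conj_commute]; exact Xe_row_fix u k l q _ f qk ql
  have cp : ∀ f, Commute (row p (u p • v)) (Xe u k l f) := fun f => by
    rw [hv, ← kap_smul, ← conj_commute]; exact Xe_row_fix u k l p _ f pk pl
  have c0 : ∀ f, Commute (row p v) (Xe u k l f) := fun f => by
    rw [← conj_commute]; exact Xe_row_fix u k l p _ f pk pl
  have cM : ∀ f, Commute (M p (z2 p q u) v) (Xe u k l f) := fun f => by
    have : M p (z2 p q u) v = (row q (u q • v))⁻¹ * Xe u k l c * (row p (u p • v))⁻¹ := by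
      rw [hX]; group
    rw [this]
    refine ((cq f).inv_left.mul_left ?_).mul_left (cp f).inv_left
    exact Xe_comm_of u k l k l p _ _ pk pl pk pl
  have hMeq : M p (z2 p q u) v = (col p (z2 p q u) * row p v * (col p (z2 p q u))⁻¹) * (row p v)⁻¹ := by
    unfold M; rw [commutatorElement_def]
  set m := col p (z2 p q u) * row p v * (col p (z2 p q u))⁻¹ with hm
  have cm : ∀ f, Commute m (Xe u k l f) := fun f => by
    have : m = M p (z2 p q u) v * row p v := by rw [hMeq]; group
    rw [this]; exact (cM f).mul_left (c0 f)
  have a1 : MulAut.conj ((row p v)⁻¹) Y = Y * Xe u k l (c * d * u q) := by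
    have : (row p v)⁻¹ = row p (kap u k l (-c)) := by
      rw [← row_neg, hv, show -c = (-1) * c by ring, kap_smul]; simp
    rw [this, Xe_A' u k l p q _ d pk pl pq]; congr 2; ring
  have a2 : MulAut.conj m Y = Y * Xe u k l (-(c * d * u q)) := by
    have hcol : col p (z2 p q u) = x k p (u k) * x l p (u l) := by
      rw [hz, col_add, col_single, col_single]
    have hcol' : (col p (z2 p q u))⁻¹ = x k p (-u k) * x l p (-u l) := by
      rw [← col_neg, hz, neg_add, ← Pi.single_neg, ← Pi.single_neg, col_add, col_single, col_single]
    set ul := u + Pi.single l (-u l * u p) with hul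
    set um := ul + Pi.single k (-u k * u p) with hum
    have ulp : ul p = u p := by simp [hul, pl]
    have ump : um p = u p := by simp [hum, hul, pl, pk]
    have umk : um k = u k - u k * u p := by simp [hum, hul, kl]; ring
    have uml : um l = u l - u l * u p := by simp [hum, hul, kl.symm]; ring
    have u' : um + Pi.single l (u l * um p) = u + Pi.single k (-u k * u p) := by
      rw [ump, hum, hul]
      have : Pi.single l (u l * u p) = - (Pi.single l (-u l * u p) : Fin n → B) := by
        rw [← Pi.single_neg]; congr 1; ring
      rw [this]; abel
    have u'' : u + Pi.single k (-u k * u p) + Pi.single k (u k * u p) = u :=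
      single_cancel _ _ _ _ (by ring)
    set w := u + Pi.single k (-u k * u p) with hw
    have wp : w p = u p := by simp [hw, pk]
    have s1 : MulAut.conj (col p (z2 p q u))⁻¹ Y = Xe um p q d := by
      rw [hcol', map_mul, MulAut.mul_apply, hY, Xe_E0 u p q l p _ d pl.symm pl.symm ql.symm,
        Xe_E0 _ p q k p _ d pk.symm pk.symm qk.symm, ← hul, ulp]
    have s2 : MulAut.conj (row p v) (Xe um p q d) =
        Xe um p q d * Xe um k q (-(c * u l * d)) * Xe um l q (-(-(c * u k) * d)) := by
      rw [hv, kap, row_two]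
      exact Xe_A um k l p q _ _ d pk pl pq (by rw [umk, uml]; ring)
    have t1 : MulAut.conj (col p (z2 p q u)) (Xe um p q d) = Y := by
      rw [← s1]; simp [MulAut.conj_apply, mul_assoc]
    have t2 : ∀ f, MulAut.conj (col p (z2 p q u)) (Xe um k q f) = Xe u k q f * Xe u p q (-(u k * f)) := by
      intro f
      rw [hcol, map_mul, MulAut.mul_apply, Xe_E0 um k q l p _ f pl.symm kl.symm ql.symm, u',
        Xe_E1 w k q p _ f pk.symm qk.symm, wp, u'']
    have t3 : ∀ f, MulAut.conj (col p (z2 p q u)) (Xe um l q f) = Xe u l q f * Xe u p q (-(u l * f)) := by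
      intro f
      rw [hcol, map_mul, MulAut.mul_apply, Xe_E1 um l q p _ f pl.symm ql.symm, u', map_mul,
        Xe_E0 w l q k p _ f pk.symm kl qk.symm, Xe_E0 w p q k p _ _ pk.symm pk.symm qk.symm, wp, u'']
    rw [hm, map_mul, map_mul, MulAut.mul_apply, MulAut.mul_apply, s1, s2, map_mul, map_mul, t1, t2, t3]
    have cc := (Xe_comm_of u l q p q k (-(-(c * u k) * d)) (-(u k * -(c * u l * d))) kl qk.symm pk.symm qk.symm).eq
    have : -(u l * -(-(c * u k) * d)) = - (-(u k * -(c * u l * d))) := by ring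
    rw [this, Xe_neg u p q (-(u k * -(c * u l * d)))]
    have hk := koszul' u k l q (c * d)
    rw [← hk]
    rw [show -(c * u l * d) = -(c * d * u l) by ring, show -(-(c * u k) * d) = c * d * u k by ring] at *
    set Z := Xe u p q (-(u k * -(c * d * u l)))
    calc _ = Y * (Xe u k q (-(c * d * u l)) * (Z * Xe u l q (c * d * u k)) * Z⁻¹) := by group
      _ = _ := by rw [← cc]; group
  have a3 : MulAut.conj (M p (z2 p q u) v) Y = Y := by
    rw [hMeq, map_mul, MulAut.mul_apply, a1, map_mul, a2, conj_commute.2 (cm _), mul_assoc, ← Xe_add]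
    simp [Xe_zero]
  have a4 : MulAut.conj (row p (u p • v)) Y = Y * Xe u k l (-(u p * c * d * u q)) := by
    rw [hv, ← kap_smul]; exact Xe_A' u k l p q _ d pk pl pq
  have a5 : MulAut.conj (row q (u q • v)) Y = Y * Xe u k l (u q * c * d * u p) := by
    rw [hv, ← kap_smul]; exact Xe_A2 u k l p q _ d qk ql pq
  rw [← conj_commute, hX, map_mul, map_mul, MulAut.mul_apply, MulAut.mul_apply, a4, map_mul, a3,
    conj_commute.2 (cM _), map_mul, a5, conj_commute.2 (cq _), mul_assoc, ← Xe_add,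
    show u q * c * d * u p + -(u p * c * d * u q) = 0 by ring, Xe_zero, mul_one]

lemma Xe_comm (u : Fin n → B) (k l p q : Fin n) (c d : B) : Commute (Xe u k l c) (Xe u p q d) := by
  by_cases h : ∀ i, i = k ∨ i = l ∨ i = p ∨ i = q
  · by_cases hd : k ≠ l ∧ p ≠ k ∧ p ≠ l ∧ q ≠ k ∧ q ≠ l ∧ p ≠ q
    · obtain ⟨h1, h2, h3, h4, h5, h6⟩ := hd
      exact Xe_disj u k l p q c d h1 h2 h3 h4 h5 h6 h
    · exfalso
      have hn4 := hn.out
      have h4 : 4 ≤ ({k, l, p, q} : Finset (Fin n)).card := by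
        have : ({k, l, p, q} : Finset (Fin n)) = Finset.univ := by
          ext i; simpa using h i
        rw [this]; simpa using hn4
      apply hd
      refine ⟨?_, ?_, ?_, ?_, ?_, ?_⟩ <;> rintro rfl
      · have := Finset.card_le_three (a := k) (b := p) (c := q); simp at h4; omega
      · have := Finset.card_le_three (a := p) (b := l) (c := q); simp [Finset.insert_comm] at h4
        rw [show ({p, l, q} : Finset (Fin n)) = {l, p, q} from Finset.insert_comm _ _ _] at this; omega
      · have := Finset.card_le_three (a := k) (b := p) (c := q); simp at h4; omega
      · have := Finset.card_le_three (a := q) (b := l) (c := p)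
        rw [show ({q, l, p, q} : Finset (Fin n)) = {q, l, p} by ext; simp; tauto] at h4; omega
      · have := Finset.card_le_three (a := k) (b := q) (c := p)
        rw [show ({k, q, p, q} : Finset (Fin n)) = {k, q, p} by ext; simp; tauto] at h4; omega
      · have := Finset.card_le_three (a := k) (b := l) (c := p); simp at h4; omega
  · push Not at h
    obtain ⟨i, h1, h2, h3, h4⟩ := h
    exact Xe_comm_of u k l p q i c d h1 h2 h3 h4

end comm
end TL

namespace TL

section rep
variable {n : ℕ} {B : Type} [CommRing B]

def tvU (i j : Fin n) (h : i ≠ j) (c : B) : (Matrix (Fin n) (Fin n) B)ˣ where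
  val := Matrix.transvection i j c
  inv := Matrix.transvection i j (-c)
  val_inv := by rw [Matrix.transvection_mul_transvection_same _ _ h]; simp
  inv_val := by rw [Matrix.transvection_mul_transvection_same _ _ h]; simp

lemma tvU_add (i j : Fin n) (h : i ≠ j) (c d : B) : tvU i j h (c + d) = tvU i j h c * tvU i j h d := by
  ext1; simp [tvU, Matrix.transvection_mul_transvection_same _ _ h]

lemma tvU_comm (i j h k : Fin n) (hij : i ≠ j) (hhk : h ≠ k) (hjh : j ≠ h) (hik : i ≠ k) (r s : B) :
    Commute (tvU i j hij r) (tvU h k hhk s) := by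
  ext1
  simp [tvU, Matrix.transvection, add_mul, mul_add, Matrix.single_mul_single_of_ne, hjh, hik.symm]
  abel

lemma tvU_mul (i j k : Fin n) (hij : i ≠ j) (hjk : j ≠ k) (hik : i ≠ k) (r s : B) :
    tvU i j hij r * tvU j k hjk s = tvU i k hik (r * s) * (tvU j k hjk s * tvU i j hij r) := by
  ext1
  simp [tvU, Matrix.transvection, add_mul, mul_add, Matrix.single_mul_single_of_ne, hij, hij.symm, hjk, hjk.symm, hik, hik.symm]
  abel

lemma lift_rels {G : Type} [Group G] (f : (i j : Fin n) → i ≠ j → B → G)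
    (h1 : ∀ i j h r s, f i j h (r + s) = f i j h r * f i j h s)
    (h2 : ∀ i j h k (hij : i ≠ j) (hhk : h ≠ k) (_ : j ≠ h) (_ : i ≠ k) r s,
      Commute (f i j hij r) (f h k hhk s))
    (h3 : ∀ i j k (hij : i ≠ j) (hjk : j ≠ k) (hik : i ≠ k) r s,
      f i j hij r * f j k hjk s = f i k hik (r * s) * (f j k hjk s * f i j hij r)) :
    ∀ w ∈ {w | StRels n B w}, FreeGroup.lift (fun g : StGen n B => f g.1.1.1 g.1.1.2 g.1.2 g.2) w = 1 := by
  rintro w (⟨i, j, h, r, s⟩ | ⟨i, j, h, k, hij, hhk, hjh, hik, r, s⟩ | ⟨i, j, k, hij, hjk, hik, r, s⟩)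
  · simp [h1]
  · rw [map_commutatorElement, FreeGroup.lift_apply_of, FreeGroup.lift_apply_of,
      commutatorElement_eq_one_iff_commute]
    exact h2 i j h k hij hhk hjh hik r s
  · rw [map_mul, map_inv, map_commutatorElement, FreeGroup.lift_apply_of, FreeGroup.lift_apply_of,
      FreeGroup.lift_apply_of, commutatorElement_def, mul_inv_eq_one]
    have := h3 i j k hij hjk hik r s
    dsimp only
    rw [this]; group

def stLift {G : Type} [Group G] (f : (i j : Fin n) → i ≠ j → B → G)
    (h1 : ∀ i j h r s, f i j h (r + s) = f i j h r * f i j h s)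
    (h2 : ∀ i j h k (hij : i ≠ j) (hhk : h ≠ k) (_ : j ≠ h) (_ : i ≠ k) r s,
      Commute (f i j hij r) (f h k hhk s))
    (h3 : ∀ i j k (hij : i ≠ j) (hjk : j ≠ k) (hik : i ≠ k) r s,
      f i j hij r * f j k hjk s = f i k hik (r * s) * (f j k hjk s * f i j hij r)) :
    SteinbergGroup n B →* G :=
  PresentedGroup.toGroup (f := fun g : StGen n B => f g.1.1.1 g.1.1.2 g.1.2 g.2) (lift_rels f h1 h2 h3)

lemma stLift_x {G : Type} [Group G] (f : (i j : Fin n) → i ≠ j → B → G) (h1) (h2) (h3)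
    (i j : Fin n) (h : i ≠ j) (r : B) : stLift f h1 h2 h3 (x i j r) = f i j h r := by
  rw [x_of i j h, stx, stLift, PresentedGroup.toGroup.of]

lemma st_ind {p : SteinbergGroup n B → Prop} (g : SteinbergGroup n B) (h1 : p 1)
    (hm : ∀ a b, p a → p b → p (a * b)) (hx : ∀ i j (_ : i ≠ j) r, p (x i j r)) : p g := by
  refine PresentedGroup.induction_on g (fun z => ?_)
  induction z using FreeGroup.induction_on with
  | C1 => simpa using h1
  | of a =>
    obtain ⟨⟨⟨i, j⟩, h⟩, r⟩ := a
    have := hx i j h r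
    rwa [x_of i j h] at this
  | inv_of a _ =>
    obtain ⟨⟨⟨i, j⟩, h⟩, r⟩ := a
    have := hx i j h (-r)
    rw [x_neg, x_of i j h] at this
    rw [map_inv]; exact this
  | mul a b ha hb => rw [map_mul]; exact hm _ _ ha hb

def rep : SteinbergGroup n B →* (Matrix (Fin n) (Fin n) B)ˣ :=
  stLift (fun i j h r => tvU i j h r) tvU_add tvU_comm tvU_mul

lemma rep_x (i j : Fin n) (h : i ≠ j) (r : B) : rep (x i j r) = tvU i j h r := stLift_x _ _ _ _ _ _ _ _

lemma vmv_single (i j : Fin n) (a b : B) :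
    Matrix.vecMulVec (Pi.single i a) (Pi.single j b) = Matrix.single i j (a * b) := by
  ext k l
  rw [Matrix.vecMulVec_apply, Matrix.single_apply, Pi.single_apply, Pi.single_apply]
  by_cases h : k = i <;> by_cases h' : l = j <;> simp [h, h', eq_comm (a := i), eq_comm (a := j)]

lemma rep_row (i : Fin n) (v : Fin n → B) (hv : v i = 0) :
    (rep (row i v) : Matrix (Fin n) (Fin n) B) = 1 + Matrix.vecMulVec (Pi.single i 1) v := by
  refine (vec_ind (p := fun v => v i = 0 ∧ (rep (row i v) : Matrix (Fin n) (Fin n) B) =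
     1 + Matrix.vecMulVec (Pi.single i 1) v) v ?_ ?_ ?_).2
  · simp [row_zero]
  · rintro v w ⟨hv, ev⟩ ⟨hw, ew⟩
    refine ⟨by simp [hv, hw], ?_⟩
    rw [row_add, map_mul, Units.val_mul, ev, ew, Matrix.vecMulVec_add, add_mul, mul_add, mul_add,
      Matrix.vecMulVec_mul_vecMulVec]
    simp [hv]; abel
  · intro k hk
    have : i ≠ k := by rintro rfl; exact hk hv
    refine ⟨by simp [this], ?_⟩
    rw [row_single, rep_x i k this, vmv_single, one_mul]
    rfl

lemma rep_col (i : Fin n) (v : Fin n → B) (hv : v i = 0) :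
    (rep (col i v) : Matrix (Fin n) (Fin n) B) = 1 + Matrix.vecMulVec v (Pi.single i 1) := by
  refine (vec_ind (p := fun v => v i = 0 ∧ (rep (col i v) : Matrix (Fin n) (Fin n) B) =
     1 + Matrix.vecMulVec v (Pi.single i 1)) v ?_ ?_ ?_).2
  · simp [col_zero]
  · rintro v w ⟨hv, ev⟩ ⟨hw, ew⟩
    refine ⟨by simp [hv, hw], ?_⟩
    rw [col_add, map_mul, Units.val_mul, ev, ew, Matrix.add_vecMulVec, add_mul, mul_add, mul_add,
      Matrix.vecMulVec_mul_vecMulVec]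
    simp [hw]; abel
  · intro k hk
    have : k ≠ i := by rintro rfl; exact hk hv
    refine ⟨by simp [this], ?_⟩
    rw [col_single, rep_x k i this, vmv_single, mul_one]
    rfl

def zz (i : Fin n) (u : Fin n → B) : Fin n → B := u - Pi.single i (u i)

lemma zz_i (i : Fin n) (u : Fin n → B) : zz i u i = 0 := by simp [zz]
lemma zz_ne (i k : Fin n) (u : Fin n → B) (h : k ≠ i) : zz i u k = u k := by simp [zz, h]

lemma col_zz (i : Fin n) (u : Fin n → B) : col i (zz i u) = col i u := by
  rw [zz, sub_eq_add_neg, ← Pi.single_neg, col_add, col_single, x_self, mul_one]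

lemma dot_zz (i : Fin n) (u v : Fin n → B) (h : v i = 0) : v ⬝ᵥ zz i u = v ⬝ᵥ u := by
  simp [zz, dotProduct_sub, h]

lemma M_zz (i : Fin n) (u v : Fin n → B) : M i (zz i u) v = M i u v := by
  rw [M, M, col_zz]

lemma mat_comm_aux {S : Type} [Ring S] (N L : S) (h1 : N * N = 0) (h2 : L * L = 0) (h3 : L * N = 0) :
    (1 + N) * (1 + L) * (1 - N) * (1 - L) = 1 + N * L := by
  have : (1 + N) * (1 + L) * (1 - N) * (1 - L) = 1 + N * L - N * N + N * N * L - L * N + L * N * L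
    - L * L - N * (L * N) + N * (L * N) * L - N * (L * L) := by noncomm_ring
  rw [this, h1, h2, h3]; simp

lemma rep_X (i : Fin n) (u v : Fin n → B) (hv : v i = 0) (h : v ⬝ᵥ u = 0) :
    (rep (X i u v) : Matrix (Fin n) (Fin n) B) = 1 + Matrix.vecMulVec u v := by
  have e1 := rep_col i (zz i u) (zz_i i u)
  have e1' := rep_col i (-zz i u) (by simp [zz_i])
  have e2 := rep_row i v hv
  have e2' := rep_row i (-v) (by simp [hv])
  have e3 := rep_row i (u i • v) (by simp [hv])
  have hd : v ⬝ᵥ zz i u = 0 := by rw [dot_zz i u v hv, h]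
  rw [X, ← M_zz, M, commutatorElement_def, ← col_neg, ← row_neg]
  simp only [map_mul, Units.val_mul]
  rw [e1, e1', e2, e2', e3, Matrix.neg_vecMulVec, Matrix.vecMulVec_neg, ← sub_eq_add_neg,
    ← sub_eq_add_neg, mat_comm_aux]
  · rw [Matrix.vecMulVec_mul_vecMulVec, mul_add, add_mul, add_mul, Matrix.vecMulVec_mul_vecMulVec]
    have : Matrix.vecMulVec u v = Matrix.vecMulVec (zz i u) v + Matrix.vecMulVec (Pi.single i 1) (u i • v) := by
      rw [Matrix.vecMulVec_smul, ← Matrix.smul_vecMulVec, ← Matrix.add_vecMulVec, ← Pi.single_smul]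
      simp [zz]
    rw [this]; simp [hv, ← add_assoc]
  · rw [Matrix.vecMulVec_mul_vecMulVec]; simp [zz_i]
  · rw [Matrix.vecMulVec_mul_vecMulVec]; simp [hv]
  · rw [Matrix.vecMulVec_mul_vecMulVec]; simp [hd]

end rep

section P
variable {n : ℕ} [hn : Fact (4 ≤ n)] {B : Type} [CommRing B]

lemma rep_Xe (u : Fin n → B) (k l : Fin n) (c : B) :
    (rep (Xe u k l c) : Matrix (Fin n) (Fin n) B) = 1 + Matrix.vecMulVec u (kap u k l c) :=
  rep_X _ _ _ (kap_ne _ _ _ _ _ (oth_k _ _) (oth_l _ _)) (kap_dot _ _ _ _)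

lemma Xe_e (i j : Fin n) (h : i ≠ j) (c : B) : Xe (Pi.single i 1) j i c = x i j c := by
  obtain ⟨m, hm1, hm2, -⟩ := exists_oth j i i
  rw [Xe_eq _ j i c m hm1 hm2]
  have : kap (Pi.single i 1) j i c = Pi.single j c := by simp [kap, h.symm]
  rw [this, X, M, col_single, row_single, commutatorElement_def, x_mul i m j hm2.symm hm1 h, one_mul]
  simp [hm2, row_zero]

noncomputable def XeHom (u : Fin n → B) (kl : Fin n × Fin n) : Multiplicative B →* SteinbergGroup n B where
  toFun r := Xe u kl.1 kl.2 r.toAdd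
  map_one' := Xe_zero _ _ _
  map_mul' r s := Xe_add _ _ _ _ _

noncomputable def PHom (u : Fin n → B) : (Fin n × Fin n → Multiplicative B) →* SteinbergGroup n B :=
  MonoidHom.noncommPiCoprod (fun kl => XeHom u kl) (by
    intro k l hkl a b
    exact Xe_comm _ _ _ _ _ _ _)

noncomputable def P (u : Fin n → B) (C : Matrix (Fin n) (Fin n) B) : SteinbergGroup n B :=
  PHom u (fun kl => Multiplicative.ofAdd (C kl.1 kl.2))

lemma P_add (u : Fin n → B) (C D : Matrix (Fin n) (Fin n) B) : P u (C + D) = P u C * P u D := by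
  unfold P; rw [← map_mul]; rfl

lemma P_zero (u : Fin n → B) : P u 0 = 1 := by
  have := P_add u 0 0
  simpa using this

lemma P_neg (u : Fin n → B) (C : Matrix (Fin n) (Fin n) B) : P u (-C) = (P u C)⁻¹ := by
  rw [eq_inv_iff_mul_eq_one, ← P_add]; simp [P_zero]

lemma P_single (u : Fin n → B) (k l : Fin n) (c : B) : P u (Matrix.single k l c) = Xe u k l c := by
  have : (fun kl : Fin n × Fin n => Multiplicative.ofAdd (Matrix.single k l c kl.1 kl.2)) =
      Pi.mulSingle (k, l) (Multiplicative.ofAdd c) := by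
    funext ⟨a, b⟩
    by_cases h : (a, b) = (k, l)
    · obtain ⟨rfl, rfl⟩ := Prod.mk.inj h; simp
    · rw [Pi.mulSingle_eq_of_ne h, Matrix.single_apply_of_ne]
      · rfl
      · rintro ⟨rfl, rfl⟩; exact h rfl
  rw [P, this]
  exact MonoidHom.noncommPiCoprod_mulSingle _ _ _

def PK (u : Fin n → B) : AddSubgroup (Matrix (Fin n) (Fin n) B) where
  carrier := {C | P u C = 1}
  zero_mem' := P_zero u
  add_mem' := by intro a b ha hb; simp only [Set.mem_setOf_eq] at *; rw [P_add, ha, hb, one_mul]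
  neg_mem' := by intro a ha; simp only [Set.mem_setOf_eq] at *; rw [P_neg, ha, inv_one]

lemma mem_PK (u : Fin n → B) (C) : C ∈ PK u ↔ P u C = 1 := Iff.rfl

lemma P_eq_of (u : Fin n → B) (C D : Matrix (Fin n) (Fin n) B) (h : C - D ∈ PK u) : P u C = P u D := by
  have : C = (C - D) + D := by abel
  rw [this, P_add, (mem_PK _ _).1 h, one_mul]

lemma P_scale (u : Fin n → B) (s : B) (C : Matrix (Fin n) (Fin n) B) :
    P (s • u) C = P u ((s * s) • C) := by
  induction C using Matrix.induction_on' with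
  | h_zero => simp [P_zero]
  | h_add C D hC hD => rw [P_add, hC, hD, ← P_add, smul_add]
  | h_std_basis k l c => rw [Matrix.smul_single, P_single, P_single, Xe_smul, smul_eq_mul]

lemma PK_self (u : Fin n → B) (k : Fin n) (c : B) : Matrix.single k k c ∈ PK u := by
  rw [mem_PK, P_single, Xe_self]

lemma PK_symm (u : Fin n → B) (k l : Fin n) (c : B) :
    Matrix.single k l c + Matrix.single l k c ∈ PK u := by
  rw [mem_PK, P_add, P_single, P_single, Xe_symm u k l c, Xe_neg]; simp

lemma PK_koszul (u : Fin n → B) (k l m : Fin n) (d : B) :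
    Matrix.single k l (d * u m) + Matrix.single l m (d * u k) + Matrix.single m k (d * u l) ∈ PK u := by
  rw [mem_PK, P_add, P_add, P_single, P_single, P_single, Xe_koszul]

lemma vec_sum (v : Fin n → B) : v = ∑ k, Pi.single k (v k) := (Finset.univ_sum_single v).symm

lemma PK_tr (u : Fin n → B) (C : Matrix (Fin n) (Fin n) B) : C + C.transpose ∈ PK u := by
  induction C using Matrix.induction_on' with
  | h_zero => simp
  | h_add C D hC hD =>
    rw [Matrix.transpose_add, add_add_add_comm]; exact add_mem hC hD
  | h_std_basis k l c => rw [Matrix.transpose_single]; exact PK_symm _ _ _ _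

lemma kapM_dot (u : Fin n → B) (C : Matrix (Fin n) (Fin n) B) :
    ((C - C.transpose).mulVec u) ⬝ᵥ u = 0 := by
  rw [Matrix.sub_mulVec, sub_dotProduct, Matrix.mulVec_transpose, ← Matrix.dotProduct_mulVec, dotProduct_comm,
    sub_self]

lemma rep_P (u : Fin n → B) (C : Matrix (Fin n) (Fin n) B) :
    (rep (P u C) : Matrix (Fin n) (Fin n) B) = 1 + Matrix.vecMulVec u ((C - C.transpose).mulVec u) := by
  induction C using Matrix.induction_on' with
  | h_zero => simp [P_zero]
  | h_add C D hC hD =>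
    rw [P_add, map_mul, Units.val_mul, hC, hD, mul_add, add_mul, add_mul,
      Matrix.vecMulVec_mul_vecMulVec, kapM_dot, Matrix.transpose_add, add_sub_add_comm, Matrix.add_mulVec,
      Matrix.vecMulVec_add]
    simp; abel
  | h_std_basis k l c =>
    rw [P_single, rep_Xe]
    congr 2
    rw [Matrix.transpose_single, Matrix.sub_mulVec, Matrix.single_mulVec, Matrix.single_mulVec, kap,
      Pi.single_neg, sub_eq_add_neg]
    rfl

end P
end TL

namespace TL

section equiv
variable {n : ℕ} [hn : Fact (4 ≤ n)] {B : Type} [CommRing B]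

lemma tv_mulVec (r s : Fin n) (t : B) (u : Fin n → B) :
    (Matrix.transvection r s t).mulVec u = u + Pi.single r (t * u s) := by
  rw [Matrix.transvection, Matrix.add_mulVec, Matrix.one_mulVec, Matrix.single_mulVec]; rfl

lemma tv_conj (r s k l : Fin n) (t c : B) :
    (Matrix.transvection r s (-t)).transpose * Matrix.single k l c * Matrix.transvection r s (-t) =
      Matrix.single k l c + Matrix.single s l (if r = k then -(t * c) else 0)
       + Matrix.single k s (if l = r then -(t * c) else 0)
       + Matrix.single s s (if r = k ∧ l = r then t * t * c else 0) := by
  simp only [Matrix.transvection, Matrix.transpose_add, Matrix.transpose_one, Matrix.transpose_single,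
    add_mul, mul_add, one_mul, mul_one]
  by_cases h1 : r = k
  · subst h1
    by_cases h2 : l = r
    · subst h2
      simp only [Matrix.single_mul_single_same, if_true, and_self]
      rw [show -t * c = -(t * c) by ring, show c * -t = -(t * c) by ring,
        show -(t * c) * -t = t * t * c by ring]
      abel
    · simp only [Matrix.single_mul_single_same, if_true, h2, and_false, if_false,
        Matrix.single_mul_single_of_ne _ _ _ _ h2]
      rw [show -t * c = -(t * c) by ring]
      simp
  · by_cases h2 : l = r
    · subst h2
      simp only [Matrix.single_mul_single_same, if_true, h1, false_and, if_false,
        Matrix.single_mul_single_of_ne _ _ _ _ h1]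
      rw [show c * -t = -(t * c) by ring]
      simp
    · simp only [h1, h2, false_and, if_false, Matrix.single_mul_single_of_ne _ _ _ _ h1,
        Matrix.single_mul_single_of_ne _ _ _ _ h2]
      simp

lemma Xe_E (u : Fin n → B) (k l r s : Fin n) (t c : B) (hrs : r ≠ s) :
    MulAut.conj (x r s t) (Xe u k l c) = P (u + Pi.single r (t * u s))
      ((Matrix.transvection r s (-t)).transpose * Matrix.single k l c * Matrix.transvection r s (-t)) := by
  rw [tv_conj]
  set w := u + Pi.single r (t * u s)
  by_cases hkl : k = l
  · subst hkl
    rw [Xe_self, map_one]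
    symm
    rw [← mem_PK]
    refine add_mem ?_ (PK_self _ _ _)
    rw [add_assoc]
    refine add_mem (PK_self _ _ _) ?_
    simp only [eq_comm (a := k)]
    exact PK_symm _ _ _ _
  have h0 : (if r = k ∧ l = r then t * t * c else 0) = 0 := by
    rw [if_neg]; rintro ⟨rfl, rfl⟩; exact hkl rfl
  rw [h0, Matrix.single_zero, add_zero, P_add, P_add, P_single, P_single, P_single]
  by_cases h1 : r = k
  · subst h1
    rw [if_pos rfl, if_neg (fun h => hkl h.symm), Xe_zero, mul_one, Xe_E1 u r l s t c hrs hkl]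
  · rw [if_neg h1, Xe_zero, mul_one]
    by_cases h2 : l = r
    · subst h2
      rw [if_pos rfl, Xe_symm u l k, Xe_E1 u l k s t _ hrs h1, Xe_symm w l k, Xe_symm w s k (-(t * c)) ]
      congr 2; ring
    · rw [if_neg h2, Xe_zero, mul_one, Xe_E0 u k l r s t c hrs h1 (Ne.symm h2)]

lemma P_equiv (b : SteinbergGroup n B) : ∀ (u : Fin n → B) (C : Matrix (Fin n) (Fin n) B),
    MulAut.conj b (P u C) = P ((rep b : Matrix (Fin n) (Fin n) B).mulVec u)
      (((rep b)⁻¹ : (Matrix (Fin n) (Fin n) B)ˣ).val.transpose * C *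
        ((rep b)⁻¹ : (Matrix (Fin n) (Fin n) B)ˣ).val) := by
  induction b using st_ind with
  | h1 => intro u C; simp
  | hm a b ha hb =>
    intro u C
    rw [map_mul, MulAut.mul_apply, hb, ha, map_mul, mul_inv_rev, Units.val_mul, Units.val_mul,
      Matrix.mulVec_mulVec, Matrix.transpose_mul]
    simp only [mul_assoc]
  | hx i j hij t =>
    intro u C
    rw [rep_x i j hij]
    change _ = P ((Matrix.transvection i j t).mulVec u) ((Matrix.transvection i j (-t)).transpose * C *
      Matrix.transvection i j (-t))
    rw [tv_mulVec]
    induction C using Matrix.induction_on' with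
    | h_zero => simp [P_zero]
    | h_add C D hC hD => rw [P_add, map_mul, hC, hD, ← P_add, mul_add, add_mul]
    | h_std_basis k l c => rw [P_single, Xe_E _ _ _ _ _ _ _ hij]

/-- cyclic matrix -/
def cyc (w : Fin n → B) (k l m : Fin n) (d : B) : Matrix (Fin n) (Fin n) B :=
  Matrix.single k l (d * w m) + Matrix.single l m (d * w k) + Matrix.single m k (d * w l)

lemma P_cyc (u w : Fin n → B) (k l m i : Fin n) (d : B) (hk : i ≠ k) (hl : i ≠ l) (hm : i ≠ m) :
    P u (cyc w k l m d) = X i u (kap u k l (d * w m) + kap u l m (d * w k) + kap u m k (d * w l)) := by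
  rw [cyc, P_add, P_add, P_single, P_single, P_single, Xe_eq u k l _ i hk hl,
    ← X_kap_add _ _ _ _ _ i hl hm (kap_ne _ _ _ _ _ hk hl) (kap_dot _ _ _ _),
    ← X_kap_add _ _ _ _ _ i hm hk]
  · simp [kap_ne, hk, hl, hm]
  · simp [add_dotProduct, kap_dot]

/-- the vector d (u × w) -/
def crs (u w : Fin n → B) (k l m : Fin n) (d : B) : Fin n → B :=
  kap u k l (d * w m) + kap u l m (d * w k) + kap u m k (d * w l)

lemma crs_eq (u w : Fin n → B) (k l m : Fin n) (d : B) : crs u w k l m d =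
    Pi.single k (d * (u l * w m - u m * w l)) + Pi.single l (d * (u m * w k - u k * w m)) +
      Pi.single m (d * (u k * w l - u l * w k)) := by
  simp only [crs, kap, mul_sub, Pi.single_sub, Pi.single_neg]
  rw [show d * w m * u l = d * (u l * w m) by ring, show d * w m * u k = d * (u k * w m) by ring,
    show d * w k * u m = d * (u m * w k) by ring, show d * w k * u l = d * (u l * w k) by ring,
    show d * w l * u k = d * (u k * w l) by ring, show d * w l * u m = d * (u m * w l) by ring]
  abel

lemma cyc_mulVec (w : Fin n → B) (k l m : Fin n) (d : B) :
    (cyc w k l m d).mulVec w = (cyc w k l m d).transpose.mulVec w := by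
  simp only [cyc, Matrix.transpose_add, Matrix.transpose_single, Matrix.add_mulVec, Matrix.single_mulVec]
  change (Pi.single k (d * w m * w l) + Pi.single l (d * w k * w m) + Pi.single m (d * w l * w k) : Fin n → B) =
    Pi.single l (d * w m * w k) + Pi.single m (d * w k * w l) + Pi.single k (d * w l * w m)
  rw [show d * w m * w k = d * w k * w m by ring, show d * w k * w l = d * w l * w k by ring,
    show d * w l * w m = d * w m * w l by ring]
  abel

lemma P_cyc_col (u w : Fin n → B) (k l m i : Fin n) (d : B) (hk : i ≠ k) (hl : i ≠ l) (hm : i ≠ m)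
    (hu : u i = 0) (s : B) :
    Commute (col i (s • w)) (P u (cyc w k l m d)) := by
  rw [← conj_commute, P_equiv]
  have hcz : cyc w k l m d = cyc (zz i w) k l m d := by
    simp [cyc, zz_ne, hk.symm, hl.symm, hm.symm]
  have hzs : zz i (s • w) = s • zz i w := by
    funext j; simp [zz, mul_sub, Pi.single_apply]
  rw [hcz, ← col_zz, hzs, ← map_inv, ← col_neg, rep_col _ _ (by simp [zz_i]), rep_col _ _ (by simp [zz_i])]
  set z := zz i w
  have hum : (1 + Matrix.vecMulVec (s • z) (Pi.single i 1)).mulVec u = u := by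
    rw [Matrix.add_mulVec, Matrix.one_mulVec, Matrix.vecMulVec_mulVec]; simp [hu]
  rw [hum]
  apply P_eq_of
  set C := cyc z k l m d
  have hC : C.mulVec z = C.transpose.mulVec z := cyc_mulVec _ _ _ _ _
  set y := C.mulVec z with hy
  rw [Matrix.transpose_add, Matrix.transpose_one, Matrix.transpose_vecMulVec, add_mul, one_mul, mul_add,
    mul_one, Matrix.vecMulVec_mul, Matrix.add_mul, Matrix.mul_vecMulVec, Matrix.vecMulVec_mul_vecMulVec,
    Matrix.mulVec_neg, Matrix.mulVec_smul, ← hy, ← Matrix.mulVec_transpose, Matrix.mulVec_neg, Matrix.mulVec_smul,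
    ← hC, Matrix.vecMulVec_smul, vmv_single, Matrix.smul_single, smul_eq_mul, mul_one, mul_one]
  have := PK_tr u (Matrix.vecMulVec (Pi.single i 1) (-(s • y)))
  rw [Matrix.transpose_vecMulVec] at this
  have h2 := add_mem this (PK_self u i (-(s • y) ⬝ᵥ -(s • z)))
  convert h2 using 1
  simp
  abel

lemma M_add_left (i : Fin n) (u w v : Fin n → B) (h : Commute (col i w) (M i u v)) :
    M i (u + w) v = M i u v * M i w v := by
  have e : M i (u + w) v = col i w * M i u v * (col i w)⁻¹ * M i w v := by
    rw [add_comm, M, M, M, col_add]; simp only [commutatorElement_def]; group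
  rw [e, h.eq]; group

lemma biadd (u w : Fin n → B) (s : B) (k l m : Fin n) (d : B) :
    P (u + s • w) (cyc w k l m d) = P u (cyc w k l m d) * P w (cyc u k l m (-(s * d))) := by
  obtain ⟨i, hk, hl, hm⟩ := exists_oth k l m
  set v := crs u w k l m d with hv
  have hv0 : v i = 0 := by simp [hv, crs, kap_ne, hk, hl, hm]
  have hvu : v ⬝ᵥ u = 0 := by simp [hv, crs, kap_dot, add_dotProduct]
  have e1 : P u (cyc w k l m d) = X i u v := P_cyc u w k l m i d hk hl hm
  have hv' : crs w u k l m (-d) = v := by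
    rw [hv, crs_eq, crs_eq]; 
    refine congr_arg₂ _ (congr_arg₂ _ (congr_arg _ ?_) (congr_arg _ ?_)) (congr_arg _ ?_) <;> ring
  have hvw : v ⬝ᵥ w = 0 := by rw [← hv']; simp [crs, kap_dot, add_dotProduct]
  have e2 : P (u + s • w) (cyc w k l m d) = X i (u + s • w) v := by
    rw [P_cyc _ w k l m i d hk hl hm]; congr 1
    change crs (u + s • w) w k l m d = v
    rw [hv, crs_eq, crs_eq]; 
    refine congr_arg₂ _ (congr_arg₂ _ (congr_arg _ ?_) (congr_arg _ ?_)) (congr_arg _ ?_) <;>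
      simp <;> ring
  have e3 : P w (cyc u k l m (-(s * d))) = X i (s • w) v := by
    rw [P_cyc w u k l m i _ hk hl hm, ← hv', crs]
    have key : ∀ a b c, X i w (kap w k l (s * a) + kap w l m (s * b) + kap w m k (s * c)) =
        X i (s • w) (kap w k l a + kap w l m b + kap w m k c) := by
      intro a b c
      have aux : ∀ p q e, i ≠ p → i ≠ q → X i w (kap w p q (s * e)) = X i (s • w) (kap w p q e) := by
        intro p q e hp hq
        obtain ⟨j, j1, j2, j3⟩ := exists_oth p q i
        rw [X_smul i j j3.symm s w _ (kap_ne _ _ _ _ _ hp hq) (kap_ne _ _ _ _ _ j1 j2) (kap_dot _ _ _ _),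
          kap_smul]
      have add : ∀ (t : Fin n → B) (y : Fin n → B) p q e, i ≠ p → i ≠ q → y i = 0 → y ⬝ᵥ t = 0 →
          kap w p q e ⬝ᵥ t = 0 → X i t (y + kap w p q e) = X i t y * X i t (kap w p q e) := by
        intro t y p q e hp hq hy hyt hd
        obtain ⟨j, j1, j2, j3⟩ := exists_oth p q i
        exact X_add i j j3.symm t y _ hy (kap_ne _ _ _ _ _ hp hq) (kap_ne _ _ _ _ _ j1 j2) hyt hd
      rw [add w _ m k _ hm hk, add w _ l m _ hl hm, add (s • w) _ m k _ hm hk, add (s • w) _ l m _ hl hm,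
        aux _ _ _ hk hl, aux _ _ _ hl hm, aux _ _ _ hm hk]
      all_goals simp [kap_ne, kap_dot, add_dotProduct, hk, hl, hm]
    rw [← key]
    congr 2
    · congr 2 <;> ring
    · ring
  have cc : Commute (col i (s • w)) (M i u v) := by
    have h := P_cyc_col (zz i u) w k l m i d hk hl hm (zz_i _ _) s
    rw [P_cyc (zz i u) w k l m i d hk hl hm] at h
    change Commute _ (X i (zz i u) (crs (zz i u) w k l m d)) at h
    have : crs (zz i u) w k l m d = v := by
      rw [hv, crs_eq, crs_eq, zz_ne _ _ _ hk.symm, zz_ne _ _ _ hl.symm, zz_ne _ _ _ hm.symm]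
    rw [this, X, M_zz, zz_i, zero_smul, row_zero, mul_one] at h
    exact h
  have cr : Commute (row i (u i • v)) (X i (s • w) v) := by
    have aux : ∀ p q e, i ≠ p → i ≠ q → Commute (row i (u i • v)) (Xe w p q e) := by
      intro p q e hp hq
      obtain ⟨j, j1, j2, j3⟩ := exists_oth p q i
      rw [Xe_eq w p q e i hp hq, X]
      refine (M_row_comm i j j3.symm w _ _ (kap_ne _ _ _ _ _ hp hq) (kap_ne _ _ _ _ _ j1 j2)
        (by simp [hv0]) (kap_dot _ _ _ _) (by simp [hvw])).mul_right ?_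
      exact row_row i i _ _ (by simp [hv0]) (by simp [kap_ne, hp, hq])
    rw [← e3, cyc, P_add, P_add, P_single, P_single, P_single]
    exact ((aux _ _ _ hk hl).mul_right (aux _ _ _ hl hm)).mul_right (aux _ _ _ hm hk)
  rw [e1, e2, e3]
  calc X i (u + s • w) v = M i u v * M i (s • w) v * row i ((s • w) i • v + u i • v) := by
        rw [X, M_add_left i u (s • w) v cc, ← add_smul, add_comm ((s • w) i)]; rfl
    _ = M i u v * (X i (s • w) v * row i (u i • v)) := by rw [row_add, X]; group
    _ = _ := by rw [← cr.eq, ← mul_assoc]; rfl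

end equiv
end TL

namespace TL

section loc
variable {n : ℕ} {B A : Type} [CommRing B] [CommRing A] [Algebra B A]

class Loc (B A : Type) [CommRing B] [CommRing A] [Algebra B A] : Prop where
  H1 : ∀ c : A, ∃ σ b : B, IsUnit (algebraMap B A σ) ∧ algebraMap B A σ * c = algebraMap B A b
  H2 : ∀ b : B, algebraMap B A b = 0 → ∃ s : B, IsUnit (algebraMap B A s) ∧ s * b = 0

structure IsRep (U : Fin n → A) (σ : B) (t : A) (u : Fin n → B) : Prop where
  unit : algebraMap B A σ * t = 1
  eq : ∀ k, algebraMap B A (u k) = algebraMap B A σ * U k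

lemma isUnit_prod {ι : Type} [Fintype ι] (σ : ι → B) (h : ∀ i, IsUnit (algebraMap B A (σ i))) :
    IsUnit (algebraMap B A (∏ i, σ i)) := by
  rw [map_prod]
  exact Finset.prod_induction _ IsUnit (fun _ _ h1 h2 => h1.mul h2) isUnit_one (fun i _ => h i)

lemma H1fin [Loc B A] {ι : Type} [Fintype ι] [DecidableEq ι] (U : ι → A) :
    ∃ (σ : B) (t : A) (u : ι → B), algebraMap B A σ * t = 1 ∧
      ∀ k, algebraMap B A (u k) = algebraMap B A σ * U k := by
  choose σ b hσ hb using fun k => Loc.H1 (B := B) (U k)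
  obtain ⟨t, ht⟩ := (isUnit_prod σ hσ).exists_right_inv
  refine ⟨∏ i, σ i, t, fun k => (∏ i ∈ Finset.univ.erase k, σ i) * b k, ht, fun k => ?_⟩
  rw [← Finset.prod_erase_mul _ _ (Finset.mem_univ k), map_mul, map_mul, ← hb, mul_assoc]

lemma H2fin [Loc B A] {ι : Type} [Fintype ι] [DecidableEq ι] (b : ι → B) (h : ∀ k, algebraMap B A (b k) = 0) :
    ∃ s : B, IsUnit (algebraMap B A s) ∧ ∀ k, s * b k = 0 := by
  choose s hs hb using fun k => Loc.H2 (A := A) (b k) (h k)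
  refine ⟨∏ i, s i, isUnit_prod s hs, fun k => ?_⟩
  rw [← Finset.prod_erase_mul _ _ (Finset.mem_univ k), mul_assoc, hb, mul_zero]

lemma exists_rep [Loc B A] (U : Fin n → A) : ∃ (σ : B) (t : A) (u : Fin n → B), IsRep U σ t u := by
  obtain ⟨σ, t, u, h1, h2⟩ := H1fin (B := B) U
  exact ⟨σ, t, u, h1, h2⟩

lemma j_mul (j : A →ₗ[B] B) (b : B) (c : A) : j (algebraMap B A b * c) = b * j c := by
  rw [← Algebra.smul_def, map_smul, smul_eq_mul]

lemma j_eta [Loc B A] (j : A →ₗ[B] B) (c : A) : algebraMap B A (j c) = c * algebraMap B A (j 1) := by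
  obtain ⟨s, b, hs, hb⟩ := Loc.H1 (B := B) c
  rw [← hs.mul_right_inj, ← map_mul, ← j_mul, hb, ← mul_assoc, hb, ← map_mul, ← j_mul, mul_one]

def jm (j : A →ₗ[B] B) (t : A) (C : Matrix (Fin n) (Fin n) A) : Matrix (Fin n) (Fin n) B :=
  C.map (fun c => j (t * t * c))

lemma jm_add (j : A →ₗ[B] B) (t : A) (C D : Matrix (Fin n) (Fin n) A) :
    jm j t (C + D) = jm j t C + jm j t D := by
  ext; simp [jm, mul_add]

lemma jm_zero (j : A →ₗ[B] B) (t : A) : jm j t (0 : Matrix (Fin n) (Fin n) A) = 0 := by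
  ext; simp [jm]

lemma jm_single (j : A →ₗ[B] B) (t c : A) (k l : Fin n) :
    jm j t (Matrix.single k l c) = Matrix.single k l (j (t * t * c)) := by
  ext a b
  rw [jm, Matrix.map_apply, Matrix.single_apply, Matrix.single_apply]
  split <;> simp

variable [hn : Fact (4 ≤ n)]

lemma PR_indep [Loc B A] (j : A →ₗ[B] B) (U : Fin n → A) (σ σ' : B) (t t' : A) (u u' : Fin n → B)
    (h : IsRep U σ t u) (h' : IsRep U σ' t' u') (C : Matrix (Fin n) (Fin n) A) :
    P u (jm j t C) = P u' (jm j t' C) := by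
  obtain ⟨s, hs, hz⟩ := H2fin (A := A) (fun k => σ' * u k - σ * u' k) (fun k => by
    rw [map_sub, map_mul, map_mul, h.eq, h'.eq]; ring)
  obtain ⟨s', hs'⟩ := hs.exists_right_inv
  have e : (s * σ') • u = (s * σ) • u' := by
    funext k; have := hz k; simp only [Pi.smul_apply, smul_eq_mul]; linear_combination this
  have h1 := P_scale u (s * σ') (jm j (s' * t * t') C)
  have h2 := P_scale u' (s * σ) (jm j (s' * t * t') C)
  have e1 : (s * σ' * (s * σ')) • jm j (s' * t * t') C = jm j t C := by
    ext a b
    simp only [jm, Matrix.smul_apply, Matrix.map_apply, smul_eq_mul]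
    rw [← j_mul]
    congr 1
    simp only [map_mul]
    have q1 := h'.unit
    calc _ = (algebraMap B A s * s') ^ 2 * (algebraMap B A σ' * t') ^ 2 * (t * t * C a b) := by ring
      _ = _ := by rw [hs', q1]; ring
  have e2 : (s * σ * (s * σ)) • jm j (s' * t * t') C = jm j t' C := by
    ext a b
    simp only [jm, Matrix.smul_apply, Matrix.map_apply, smul_eq_mul]
    rw [← j_mul]
    congr 1
    simp only [map_mul]
    have q1 := h.unit
    calc _ = (algebraMap B A s * s') ^ 2 * (algebraMap B A σ * t) ^ 2 * (t' * t' * C a b) := by ring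
      _ = _ := by rw [hs', q1]; ring
  rw [← e1, ← e2, ← h1, ← h2, e]

variable [Loc B A]

noncomputable def PU (j : A →ₗ[B] B) (U : Fin n → A) (C : Matrix (Fin n) (Fin n) A) : SteinbergGroup n B :=
  P (exists_rep (B := B) U).choose_spec.choose_spec.choose
    (jm j (exists_rep (B := B) U).choose_spec.choose C)

lemma PU_eq (j : A →ₗ[B] B) (U : Fin n → A) (C : Matrix (Fin n) (Fin n) A) (σ : B) (t : A) (u : Fin n → B)
    (h : IsRep U σ t u) : PU j U C = P u (jm j t C) :=
  PR_indep j U _ _ _ _ _ _ (exists_rep (B := B) U).choose_spec.choose_spec.choose_spec h C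

lemma PU_add (j : A →ₗ[B] B) (U : Fin n → A) (C D : Matrix (Fin n) (Fin n) A) :
    PU j U (C + D) = PU j U C * PU j U D := by
  rw [PU, PU, PU, jm_add, P_add]

lemma PU_zero (j : A →ₗ[B] B) (U : Fin n → A) : PU j U 0 = 1 := by
  rw [PU, jm_zero, P_zero]

lemma PU_neg (j : A →ₗ[B] B) (U : Fin n → A) (C : Matrix (Fin n) (Fin n) A) :
    PU j U (-C) = (PU j U C)⁻¹ := by
  rw [eq_inv_iff_mul_eq_one, ← PU_add]; simp [PU_zero]

lemma PU_addj (j j' : A →ₗ[B] B) (U : Fin n → A) (C : Matrix (Fin n) (Fin n) A) :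
    PU (j + j') U C = PU j U C * PU j' U C := by
  rw [PU, PU, PU, ← P_add]; congr 1

lemma PU_smulj (j j' : A →ₗ[B] B) (a : A) (h : ∀ c, j' c = j (a * c)) (U : Fin n → A)
    (C : Matrix (Fin n) (Fin n) A) :
    PU j' U C = PU j U (a • C) := by
  rw [PU, PU]; congr 1
  ext k l
  simp only [jm, Matrix.map_apply, Matrix.smul_apply, h, smul_eq_mul]
  congr 1; ring

/-- kernel -/
def UK (B : Type) [CommRing B] [Algebra B A] [Loc B A] (U : Fin n → A) : Submodule A (Matrix (Fin n) (Fin n) A) where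
  carrier := {C | ∀ j : A →ₗ[B] B, PU j U C = 1}
  zero_mem' := fun j => PU_zero j U
  add_mem' := by intro a b ha hb j; rw [PU_add, ha, hb, one_mul]
  smul_mem' := by
    intro a C h j
    rw [← PU_smulj j (j ∘ₗ LinearMap.mulLeft B a) a (fun c => rfl)]
    exact h _

lemma mem_UK (U : Fin n → A) (C : Matrix (Fin n) (Fin n) A) :
    C ∈ UK B U ↔ ∀ j : A →ₗ[B] B, PU j U C = 1 := Iff.rfl

lemma PU_eq_of (j : A →ₗ[B] B) (U : Fin n → A) (C D : Matrix (Fin n) (Fin n) A) (h : C - D ∈ UK B U) :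
    PU j U C = PU j U D := by
  have : C = (C - D) + D := by abel
  rw [this, PU_add, (mem_UK _ _).1 h j, one_mul]

lemma UK_tr (U : Fin n → A) (C : Matrix (Fin n) (Fin n) A) : C + C.transpose ∈ UK B U := by
  intro j
  rw [PU, jm_add]
  exact PK_tr _ (jm j _ C)

lemma UK_self (U : Fin n → A) (k : Fin n) (c : A) : Matrix.single k k c ∈ UK B U := by
  intro j
  rw [PU, jm_single]
  exact PK_self _ _ _

lemma UK_vv (U v : Fin n → A) : Matrix.vecMulVec v v ∈ UK B U := by
  refine vec_ind (p := fun v => Matrix.vecMulVec v v ∈ UK B U) v ?_ ?_ ?_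
  · simp
  · intro v w hv hw
    have := add_mem (add_mem hv hw) (UK_tr U (Matrix.vecMulVec v w))
    convert this using 1
    rw [Matrix.transpose_vecMulVec, Matrix.add_vecMulVec, Matrix.vecMulVec_add, Matrix.vecMulVec_add]; abel
  · intro k _
    rw [vmv_single]; exact UK_self _ _ _

lemma jm_cyc (j : A →ₗ[B] B) (U : Fin n → A) (k l m : Fin n) (d : A) (τ σ t) (u : Fin n → B) (h : IsRep U σ t u) :
    jm j τ (cyc U k l m d) = cyc u k l m (j (τ * τ * t * d)) := by
  have hU : ∀ m, j (τ * τ * (d * U m)) = j (τ * τ * t * d) * u m := by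
    intro m
    rw [mul_comm _ (u m), ← j_mul, h.eq]
    congr 1
    have := h.unit
    linear_combination (-(τ * τ * d * U m)) * this
  rw [cyc, jm_add, jm_add, jm_single, jm_single, jm_single, cyc, hU, hU, hU]

lemma UK_cyc (U : Fin n → A) (k l m : Fin n) (d : A) : cyc U k l m d ∈ UK B U := by
  intro j
  obtain ⟨σ, t, u, h⟩ := exists_rep (B := B) U
  rw [PU_eq j U _ σ t u h, jm_cyc j U k l m d t σ t u h]
  exact PK_koszul _ _ _ _ _

def tens (U a b c : Fin n → A) : Matrix (Fin n) (Fin n) A :=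
  (c ⬝ᵥ U) • Matrix.vecMulVec a b + (a ⬝ᵥ U) • Matrix.vecMulVec b c + (b ⬝ᵥ U) • Matrix.vecMulVec c a

lemma tens_add1 (U a a' b c : Fin n → A) : tens U (a + a') b c = tens U a b c + tens U a' b c := by
  simp only [tens, Matrix.add_vecMulVec, Matrix.vecMulVec_add, add_dotProduct, smul_add, add_smul]; abel

lemma tens_cyc (U a b c : Fin n → A) : tens U a b c = tens U b c a := by
  simp only [tens]; abel

lemma tens_add2 (U a b b' c : Fin n → A) : tens U a (b + b') c = tens U a b c + tens U a b' c := by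
  simp only [tens_cyc U a]; exact tens_add1 _ _ _ _ _

lemma tens_add3 (U a b c c' : Fin n → A) : tens U a b (c + c') = tens U a b c + tens U a b c' := by
  simp only [tens_cyc U a]; exact tens_add2 _ _ _ _ _

lemma tens_zero1 (U b c : Fin n → A) : tens U 0 b c = 0 := by simp [tens]
lemma tens_zero2 (U a c : Fin n → A) : tens U a 0 c = 0 := by simp [tens]
lemma tens_zero3 (U a b : Fin n → A) : tens U a b 0 = 0 := by simp [tens]

lemma tens_single (U : Fin n → A) (k l m : Fin n) (a b c : A) :
    tens U (Pi.single k a) (Pi.single l b) (Pi.single m c) = cyc U k l m (a * b * c) := by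
  simp only [tens, vmv_single, single_dotProduct, Matrix.smul_single, smul_eq_mul, cyc]
  rw [show c * U m * (a * b) = a * b * c * U m by ring, show a * U k * (b * c) = a * b * c * U k by ring,
    show b * U l * (c * a) = a * b * c * U l by ring]

lemma tens_ind {p : (Fin n → A) → (Fin n → A) → (Fin n → A) → Prop} (a b c : Fin n → A)
    (h1 : ∀ b c, p 0 b c) (h2 : ∀ a c, p a 0 c) (h3 : ∀ a b, p a b 0)
    (a1 : ∀ a a' b c, p a b c → p a' b c → p (a + a') b c)
    (a2 : ∀ a b b' c, p a b c → p a b' c → p a (b + b') c)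
    (a3 : ∀ a b c c', p a b c → p a b c' → p a b (c + c'))
    (hs : ∀ k l m x y z, p (Pi.single k x) (Pi.single l y) (Pi.single m z)) : p a b c := by
  refine vec_ind (p := fun a => p a b c) a (h1 _ _) (fun a a' => a1 a a' b c) fun k _ => ?_
  refine vec_ind (p := fun b => p _ b c) b (h2 _ _) (fun b b' => a2 _ b b' c) fun l _ => ?_
  exact vec_ind (p := fun c => p _ _ c) c (h3 _ _) (fun c c' => a3 _ _ c c') fun m _ => hs _ _ _ _ _ _

lemma UK_tens (U a b c : Fin n → A) : tens U a b c ∈ UK B U := by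
  refine tens_ind (p := fun a b c => tens U a b c ∈ UK B U) a b c ?_ ?_ ?_ ?_ ?_ ?_ ?_
  · intros; rw [tens_zero1]; exact zero_mem _
  · intros; rw [tens_zero2]; exact zero_mem _
  · intros; rw [tens_zero3]; exact zero_mem _
  · intro a a' b c h h'; rw [tens_add1]; exact add_mem h h'
  · intro a a' b c h h'; rw [tens_add2]; exact add_mem h h'
  · intro a a' b c h h'; rw [tens_add3]; exact add_mem h h'
  · intros; rw [tens_single]; exact UK_cyc _ _ _ _ _

lemma UK_W (U V W W' : Fin n → A) (h : V ⬝ᵥ U = 0) (hW : W ⬝ᵥ U = 1) (hW' : W' ⬝ᵥ U = 1) :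
    Matrix.vecMulVec V W - Matrix.vecMulVec V W' ∈ UK B U := by
  have h1 := UK_tens (B := B) U V W W'
  have h2 := UK_tr (B := B) U (Matrix.vecMulVec V W')
  rw [Matrix.transpose_vecMulVec] at h2
  simp only [tens, h, hW, hW', one_smul, zero_smul, add_zero] at h1
  convert sub_mem h1 h2 using 1
  abel

/-- the matrix group map -/
def GG (A : Type) [CommRing A] [Algebra B A] : SteinbergGroup n B →* (Matrix (Fin n) (Fin n) A)ˣ :=
  (Units.map ((algebraMap B A).mapMatrix : Matrix (Fin n) (Fin n) B →+* Matrix (Fin n) (Fin n) A).toMonoidHom).comp rep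

lemma GG_val (b : SteinbergGroup n B) :
    (GG A b : Matrix (Fin n) (Fin n) A) = (rep b : Matrix (Fin n) (Fin n) B).map (algebraMap B A) := rfl

lemma jm_mul_left (j : A →ₗ[B] B) (t : A) (D : Matrix (Fin n) (Fin n) B) (C : Matrix (Fin n) (Fin n) A) :
    jm j t (D.map (algebraMap B A) * C) = D * jm j t C := by
  ext k l
  simp only [jm, Matrix.map_apply, Matrix.mul_apply, Finset.mul_sum, map_sum]
  refine Finset.sum_congr rfl fun i _ => ?_
  rw [← j_mul]; congr 1; ring

lemma jm_mul_right (j : A →ₗ[B] B) (t : A) (D : Matrix (Fin n) (Fin n) B) (C : Matrix (Fin n) (Fin n) A) :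
    jm j t (C * D.map (algebraMap B A)) = jm j t C * D := by
  ext k l
  simp only [jm, Matrix.map_apply, Matrix.mul_apply, Finset.mul_sum, map_sum]
  refine Finset.sum_congr rfl fun i _ => ?_
  rw [mul_comm _ (D i l), ← j_mul]; congr 1; ring

lemma PU_equiv (j : A →ₗ[B] B) (b : SteinbergGroup n B) (U : Fin n → A) (C : Matrix (Fin n) (Fin n) A) :
    MulAut.conj b (PU j U C) = PU j ((GG A b : Matrix (Fin n) (Fin n) A).mulVec U)
      (((GG A b)⁻¹ : (Matrix (Fin n) (Fin n) A)ˣ).val.transpose * C *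
        ((GG A b)⁻¹ : (Matrix (Fin n) (Fin n) A)ˣ).val) := by
  obtain ⟨σ, t, u, h⟩ := exists_rep (B := B) U
  have h' : IsRep ((GG A b : Matrix (Fin n) (Fin n) A).mulVec U) σ t
      ((rep b : Matrix (Fin n) (Fin n) B).mulVec u) := by
    refine ⟨h.unit, fun k => ?_⟩
    rw [GG_val]
    simp only [Matrix.mulVec, dotProduct, map_sum, map_mul, h.eq, Finset.mul_sum, Matrix.map_apply]
    refine Finset.sum_congr rfl fun i _ => by ring
  rw [PU_eq j U C σ t u h, P_equiv, PU_eq j _ _ σ t _ h', show (GG A b)⁻¹ = GG A b⁻¹ from (map_inv _ _).symm,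
    show (rep b)⁻¹ = rep b⁻¹ from (map_inv _ _).symm, GG_val b⁻¹, ← Matrix.transpose_map, jm_mul_right, jm_mul_left]

lemma GG_PU (j : A →ₗ[B] B) (U : Fin n → A) (C : Matrix (Fin n) (Fin n) A) :
    (GG A (PU j U C) : Matrix (Fin n) (Fin n) A) =
      1 + algebraMap B A (j 1) • Matrix.vecMulVec U ((C - C.transpose).mulVec U) := by
  obtain ⟨σ, t, u, h⟩ := exists_rep (B := B) U
  rw [GG_val, PU_eq j U C σ t u h, rep_P]
  ext a b
  simp only [Matrix.map_apply, Matrix.add_apply, map_add, Matrix.one_apply, Matrix.smul_apply,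
    Matrix.vecMulVec_apply, map_mul, smul_eq_mul, apply_ite (algebraMap B A), map_one, map_zero, h.eq]
  congr 1
  simp only [Matrix.mulVec, dotProduct, map_sum, map_mul, h.eq, Finset.mul_sum]
  refine Finset.sum_congr rfl fun i _ => ?_
  simp only [Matrix.sub_apply, Matrix.transpose_apply, map_sub, jm, Matrix.map_apply]
  rw [j_eta j (t * t * C b i), j_eta j (t * t * C i b)]
  have := h.unit
  set s := algebraMap B A σ
  set e := algebraMap B A (j 1)
  calc _ = (s * t) ^ 2 * (e * (U a * ((C b i - C i b) * U i))) := by ring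
    _ = _ := by rw [this]; ring

lemma PU_comm (j j' : A →ₗ[B] B) (U U' : Fin n → A) (C C' : Matrix (Fin n) (Fin n) A)
    (h : ((C - C.transpose).mulVec U) ⬝ᵥ U' = 0) (h' : C'.mulVec U = C'.transpose.mulVec U) :
    Commute (PU j U C) (PU j' U' C') := by
  rw [← conj_commute, PU_equiv, ← map_inv, ← PU_neg, GG_PU, GG_PU]
  set v := (C - C.transpose).mulVec U with hv
  have hv' : ((-C - (-C).transpose).mulVec U) = -v := by
    rw [hv, Matrix.transpose_neg, ← neg_sub', Matrix.neg_mulVec]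
  rw [hv']
  set e := algebraMap B A (j 1)
  have h1 : (1 + e • Matrix.vecMulVec U v).mulVec U' = U' := by
    rw [Matrix.add_mulVec, Matrix.one_mulVec, Matrix.smul_mulVec, Matrix.vecMulVec_mulVec, h]; simp
  rw [h1]
  apply PU_eq_of
  set y := C'.mulVec U with hy
  rw [Matrix.vecMulVec_neg, smul_neg, ← Matrix.smul_vecMulVec, Matrix.transpose_add, Matrix.transpose_one,
    Matrix.transpose_neg, Matrix.transpose_vecMulVec, ← Matrix.neg_vecMulVec, ← Matrix.vecMulVec_neg,
    add_mul, one_mul, mul_add, mul_one, Matrix.vecMulVec_mul, Matrix.add_mul, Matrix.mul_vecMulVec,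
    Matrix.vecMulVec_mul_vecMulVec, ← Matrix.mulVec_transpose,
    Matrix.mulVec_smul, Matrix.mulVec_smul, ← h', ← hy]
  have a1 := UK_tr (B := B) U' (Matrix.vecMulVec (-v) (e • y))
  rw [Matrix.transpose_vecMulVec] at a1
  have a2 := (UK B U').smul_mem ((e • y) ⬝ᵥ (e • U)) (UK_vv U' (-v))
  rw [← Matrix.vecMulVec_smul] at a2
  convert add_mem a1 a2 using 1
  abel

lemma tens_mulVec (U a b c : Fin n → A) : (tens U a b c).mulVec U = (tens U a b c).transpose.mulVec U := by
  simp only [tens, Matrix.transpose_add, Matrix.transpose_smul, Matrix.transpose_vecMulVec, Matrix.add_mulVec,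
    Matrix.smul_mulVec, Matrix.vecMulVec_mulVec]
  simp only [op_smul_eq_smul, smul_smul]
  rw [mul_comm (c ⬝ᵥ U), mul_comm (a ⬝ᵥ U), mul_comm (b ⬝ᵥ U) (a ⬝ᵥ U)]
  abel

lemma tens_dot (U U' a b c : Fin n → A) :
    ((tens U' a b c - (tens U' a b c).transpose).mulVec U) ⬝ᵥ U' = 0 := by
  rw [dotProduct_comm, Matrix.dotProduct_mulVec, ← Matrix.mulVec_transpose, Matrix.transpose_sub,
    Matrix.transpose_transpose, Matrix.sub_mulVec, tens_mulVec, sub_self, zero_dotProduct]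

lemma PU_tens_comm (j j' : A →ₗ[B] B) (U U' a b c a' b' c' : Fin n → A) :
    Commute (PU j U (tens U' a b c)) (PU j' U' (tens U a' b' c')) :=
  PU_comm j j' U U' _ _ (tens_dot _ _ _ _ _) (tens_mulVec _ _ _ _)

lemma cyc_smul (w : Fin n → B) (k l m : Fin n) (d s : B) : cyc (s • w) k l m d = cyc w k l m (d * s) := by
  simp [cyc, mul_assoc]

lemma biaddU (j : A →ₗ[B] B) (U U' : Fin n → A) (r : A) (k l m : Fin n) (d : A) :
    PU j (U + r • U') (cyc U' k l m d) = PU j U (cyc U' k l m d) * PU j U' (cyc U k l m (-(r * d))) := by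
  obtain ⟨σ, t, f, h1, h2⟩ := H1fin (B := B) (fun i : Option (Fin n ⊕ Fin n) =>
    i.elim r (Sum.elim U U'))
  set u : Fin n → B := fun k => f (some (Sum.inl k))
  set u' : Fin n → B := fun k => f (some (Sum.inr k))
  set ρ := f none
  have hu : IsRep U σ t u := ⟨h1, fun k => h2 (some (Sum.inl k))⟩
  have hu' : IsRep U' σ t u' := ⟨h1, fun k => h2 (some (Sum.inr k))⟩
  have hρ : algebraMap B A ρ = algebraMap B A σ * r := h2 none
  have hσ : algebraMap B A (σ * σ) * (t * t) = 1 := by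
    rw [map_mul]; calc _ = (algebraMap B A σ * t) ^ 2 := by ring
      _ = _ := by rw [h1, one_pow]
  have r1 : IsRep (U + r • U') (σ * σ) (t * t) (σ • u + ρ • u') := by
    refine ⟨hσ, fun k => ?_⟩
    simp only [Pi.add_apply, Pi.smul_apply, smul_eq_mul, map_add, map_mul, hu.eq, hu'.eq, hρ]; ring
  have r2 : IsRep U (σ * σ) (t * t) (σ • u) := by
    refine ⟨hσ, fun k => ?_⟩
    simp only [Pi.smul_apply, smul_eq_mul, map_mul, hu.eq]; ring
  rw [PU_eq j _ _ _ _ _ r1, PU_eq j _ _ _ _ _ r2, PU_eq j _ _ _ _ _ hu',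
    jm_cyc j U' k l m d (t * t) σ t u' hu', jm_cyc j U k l m _ t σ t u hu, biadd, cyc_smul]
  congr 3
  rw [neg_mul, mul_right_comm, ← j_mul, mul_neg, map_neg]
  congr 2
  rw [map_mul, hρ]
  linear_combination (t * t * t * r * d * (algebraMap B A σ * t + 1)) * h1

lemma biaddT (j : A →ₗ[B] B) (U U' : Fin n → A) (r : A) (a b c : Fin n → A) :
    PU j (U + r • U') (tens U' a b c) = PU j U (tens U' a b c) * PU j U' (tens U ((-r) • a) b c) := by
  have aux : ∀ p q s t : SteinbergGroup n B, Commute q s → (p * s) * (q * t) = (p * q) * (s * t) := by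
    intro p q s t h
    rw [mul_assoc, ← mul_assoc s, ← h.eq]; simp only [mul_assoc]
  refine tens_ind (p := fun a b c => PU j (U + r • U') (tens U' a b c) =
    PU j U (tens U' a b c) * PU j U' (tens U ((-r) • a) b c)) a b c ?_ ?_ ?_ ?_ ?_ ?_ ?_
  · intros; simp [tens_zero1, PU_zero]
  · intros; simp [tens_zero2, PU_zero]
  · intros; simp [tens_zero3, PU_zero]
  · intro a a' b c h h'
    rw [smul_add, tens_add1, tens_add1, PU_add, PU_add, PU_add, h, h', aux]
    exact PU_tens_comm _ _ _ _ _ _ _ _ _ _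
  · intro a a' b c h h'
    rw [tens_add2, tens_add2, PU_add, PU_add, PU_add, h, h', aux]
    exact PU_tens_comm _ _ _ _ _ _ _ _ _ _
  · intro a a' b c h h'
    rw [tens_add3, tens_add3, PU_add, PU_add, PU_add, h, h', aux]
    exact PU_tens_comm _ _ _ _ _ _ _ _ _ _
  · intro k l m x y z
    rw [← Pi.single_smul, tens_single, tens_single, biaddU]
    congr 3
    simp only [smul_eq_mul]; ring

lemma biaddW (j : A →ₗ[B] B) (U U' V W W' : Fin n → A) (r : A) (hVU : V ⬝ᵥ U = 0) (hVU' : V ⬝ᵥ U' = 0)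
    (hWU' : W ⬝ᵥ U' = 0) (hW'U : W' ⬝ᵥ U = 0) (hWU : W ⬝ᵥ U = 1) (hW'U' : W' ⬝ᵥ U' = 1) :
    PU j (U + r • U') (Matrix.vecMulVec V W) =
      PU j U (Matrix.vecMulVec V W) * PU j U' (r • Matrix.vecMulVec V W') := by
  have := biaddT j U U' r V W W'
  simp only [tens, hVU, hVU', hWU', hW'U, hWU, hW'U', one_smul, zero_smul, add_zero, smul_dotProduct,
    smul_zero, zero_add] at this
  rw [this]
  congr 1
  apply PU_eq_of
  have h2 := UK_tr (B := B) U' (r • Matrix.vecMulVec V W')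
  rw [Matrix.transpose_smul, Matrix.transpose_vecMulVec] at h2
  convert neg_mem h2 using 1
  rw [Matrix.vecMulVec_smul, neg_smul]; abel

end loc
end TL


namespace TL

section zz
variable {n : ℕ} {B A : Type} [CommRing B] [CommRing A] [Algebra B A] [hn : Fact (4 ≤ n)] [Loc B A]

noncomputable def ZZ (j : A →ₗ[B] B) (γ : (Matrix (Fin n) (Fin n) A)ˣ) (i k : Fin n) : SteinbergGroup n B :=
  PU j (fun a => γ.val a i) (Matrix.vecMulVec (γ⁻¹.val k) (γ⁻¹.val i))

lemma tvU_val (i j : Fin n) (h : i ≠ j) (c : A) : (tvU i j h c).val = 1 + Matrix.single i j c := rfl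

lemma cr_dot (γ : (Matrix (Fin n) (Fin n) A)ˣ) (i k : Fin n) :
    γ⁻¹.val k ⬝ᵥ (fun a => γ.val a i) = if k = i then 1 else 0 := by
  have : (γ⁻¹.val * γ.val) k i = (1 : Matrix (Fin n) (Fin n) A) k i := by
    rw [← Units.val_mul, inv_mul_cancel, Units.val_one]
  rw [Matrix.one_apply] at this
  rw [← this]; rfl

lemma cr_ne (γ : (Matrix (Fin n) (Fin n) A)ˣ) (i k : Fin n) (h : k ≠ i) :
    γ⁻¹.val k ⬝ᵥ (fun a => γ.val a i) = 0 := by rw [cr_dot, if_neg h]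

lemma cr_eq (γ : (Matrix (Fin n) (Fin n) A)ˣ) (i : Fin n) :
    γ⁻¹.val i ⬝ᵥ (fun a => γ.val a i) = 1 := by rw [cr_dot, if_pos rfl]

lemma ZZ_equiv (j : A →ₗ[B] B) (b : SteinbergGroup n B) (γ : (Matrix (Fin n) (Fin n) A)ˣ) (i k : Fin n) :
    MulAut.conj b (ZZ j γ i k) = ZZ j (GG A b * γ) i k := by
  rw [ZZ, PU_equiv, ZZ]
  congr 1
  rw [mul_inv_rev, Units.val_mul, Matrix.mul_vecMulVec, Matrix.vecMulVec_mul, Matrix.mulVec_transpose]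
  rfl

lemma GG_ZZ (j : A →ₗ[B] B) (γ : (Matrix (Fin n) (Fin n) A)ˣ) (i k : Fin n) (h : i ≠ k) :
    GG A (ZZ j γ i k) * γ = γ * tvU i k h (algebraMap B A (j 1)) := by
  ext a b
  rw [Units.val_mul, ZZ, GG_PU, Matrix.transpose_vecMulVec, Matrix.sub_mulVec, Matrix.vecMulVec_mulVec,
    Matrix.vecMulVec_mulVec, cr_eq, cr_ne _ _ _ h.symm, Units.val_mul]
  simp only [MulOpposite.op_one, one_smul, MulOpposite.op_zero, zero_smul, sub_zero]
  rw [add_mul, one_mul, tvU_val, mul_add, mul_one, Matrix.add_apply, Matrix.add_apply]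
  congr 1
  rw [Matrix.smul_mul, Matrix.smul_apply, Matrix.vecMulVec_mul, Matrix.vecMulVec_apply]
  have : Matrix.vecMul (γ⁻¹.val k) γ.val b = if k = b then 1 else 0 := cr_dot γ b k
  rw [this]
  by_cases hb : k = b
  · subst hb; simp [mul_comm]
  · rw [Matrix.mul_single_apply_of_ne (hbj := Ne.symm hb)]; simp [hb]

lemma tv_cl (γ : (Matrix (Fin n) (Fin n) A)ˣ) (p q : Fin n) (h : p ≠ q) (r : A) (i : Fin n) :
    (fun a => (γ * tvU p q h r).val a i) = (fun a => γ.val a i) + if i = q then r • (fun a => γ.val a p) else 0 := by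
  funext a
  rw [Units.val_mul, tvU_val, mul_add, mul_one, Matrix.add_apply, Pi.add_apply]
  congr 1
  by_cases hb : i = q
  · subst hb; simp [mul_comm]
  · rw [Matrix.mul_single_apply_of_ne (hbj := hb)]; simp [hb]

lemma tv_rw (γ : (Matrix (Fin n) (Fin n) A)ˣ) (p q : Fin n) (h : p ≠ q) (r : A) (i : Fin n) :
    (γ * tvU p q h r)⁻¹.val i = γ⁻¹.val i + if i = p then (-r) • γ⁻¹.val q else 0 := by
  funext a
  have : (tvU p q h r)⁻¹.val = Matrix.transvection p q (-r) := rfl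
  rw [mul_inv_rev, Units.val_mul, this, Matrix.transvection, add_mul, one_mul, Matrix.add_apply, Pi.add_apply]
  congr 1
  by_cases hb : i = p
  · subst hb; simp
  · rw [Matrix.single_mul_apply_of_ne (h := hb)]; simp [hb]

def js (r : A) (j : A →ₗ[B] B) : A →ₗ[B] B := j ∘ₗ LinearMap.mulLeft B r

lemma ZZ_tv0 (j : A →ₗ[B] B) (γ : (Matrix (Fin n) (Fin n) A)ˣ) (p q : Fin n) (h : p ≠ q) (r : A) (k l : Fin n)
    (hkl : k ≠ l) (hqk : q ≠ k) (hpl : p ≠ l) : ZZ j (γ * tvU p q h r) k l = ZZ j γ k l := by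
  rw [ZZ, ZZ, tv_cl, tv_rw, tv_rw, if_neg hqk.symm, if_neg hpl.symm, add_zero, add_zero]
  apply PU_eq_of
  apply UK_W
  · exact cr_ne _ _ _ hkl.symm
  · rw [add_dotProduct, cr_eq]
    split
    · rw [smul_dotProduct, cr_ne _ _ _ hqk]; simp
    · simp
  · exact cr_eq _ _

lemma ZZ_tv1 (j : A →ₗ[B] B) (γ : (Matrix (Fin n) (Fin n) A)ˣ) (q : Fin n) (r : A) (k l : Fin n) (h : l ≠ q)
    (hkl : k ≠ l) (hqk : q ≠ k) : ZZ j (γ * tvU l q h r) k l = ZZ j γ k l * ZZ (js (-r) j) γ k q := by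
  rw [ZZ, ZZ, ZZ, tv_cl, tv_rw, tv_rw, if_neg hqk.symm, if_pos rfl, if_neg hkl, add_zero, add_zero,
    Matrix.add_vecMulVec, PU_add, PU_smulj j (js (-r) j) (-r) (fun c => rfl), Matrix.smul_vecMulVec]

lemma ZZ_tv2 (j : A →ₗ[B] B) (γ : (Matrix (Fin n) (Fin n) A)ˣ) (p : Fin n) (r : A) (k l : Fin n) (h : p ≠ k)
    (hkl : k ≠ l) (hpl : p ≠ l) : ZZ j (γ * tvU p k h r) k l = ZZ j γ k l * ZZ (js r j) γ p l := by
  rw [ZZ, ZZ, ZZ, tv_cl, tv_rw, tv_rw, if_neg hpl.symm, if_pos rfl, if_neg h.symm, add_zero, add_zero,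
    PU_smulj j (js r j) r (fun c => rfl)]
  apply biaddW
  · exact cr_ne _ _ _ hkl.symm
  · exact cr_ne _ _ _ hpl.symm
  · exact cr_ne _ _ _ h.symm
  · exact cr_ne _ _ _ h
  · exact cr_eq _ _
  · exact cr_eq _ _

lemma ZZ_one (j : A →ₗ[B] B) (i k : Fin n) (h : i ≠ k) : ZZ j 1 i k = x i k (j 1) := by
  have hr : IsRep (B := B) (fun a => (1 : (Matrix (Fin n) (Fin n) A)ˣ).val a i) 1 1 (Pi.single i 1) := by
    refine ⟨by simp, fun k => ?_⟩
    simp [Matrix.one_apply, Pi.single_apply]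
  rw [ZZ, PU_eq j _ _ _ _ _ hr, ← Xe_e i k h, ← P_single, inv_one]
  congr 1
  have : Matrix.vecMulVec ((1 : (Matrix (Fin n) (Fin n) A)ˣ).val k) ((1 : (Matrix (Fin n) (Fin n) A)ˣ).val i) = Matrix.single k i (1 : A) := by
    ext a b
    simp [Matrix.vecMulVec_apply, Matrix.one_apply, Matrix.single_apply, ite_and]
    split_ifs <;> rfl
  rw [this, jm_single]; simp

lemma ZZ_comm (j j' : A →ₗ[B] B) (γ : (Matrix (Fin n) (Fin n) A)ˣ) (p q k l : Fin n) (h : p ≠ q)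
    (hkl : k ≠ l) (hqk : q ≠ k) (hpl : p ≠ l) : Commute (ZZ j γ p q) (ZZ j' γ k l) := by
  rw [← conj_commute, ZZ_equiv, GG_ZZ _ _ _ _ h, ZZ_tv0 _ _ _ _ _ _ _ _ hkl hqk hpl]

lemma ZZ_addj (j j' : A →ₗ[B] B) (γ : (Matrix (Fin n) (Fin n) A)ˣ) (k l : Fin n) :
    ZZ (j + j') γ k l = ZZ j γ k l * ZZ j' γ k l := PU_addj _ _ _ _

def actΓ (n : ℕ) (A G : Type) [CommRing A] [Group G] :
    (Matrix (Fin n) (Fin n) A)ˣ →* MulAut ((Matrix (Fin n) (Fin n) A)ˣ → G) where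
  toFun δ := { toFun := fun f γ => f (γ * δ)
               invFun := fun f γ => f (γ * δ⁻¹)
               left_inv := fun f => by funext γ; simp
               right_inv := fun f => by funext γ; simp
               map_mul' := fun f g => rfl }
  map_one' := by ext f; simp
  map_mul' a b := by ext f; simp [mul_assoc]

structure Dat (B A : Type) [CommRing B] [CommRing A] [Algebra B A] where
  cst : A →+* A
  J : A →+ (A →ₗ[B] B)
  h1 : ∀ p, algebraMap B A (J p 1) = p - cst p
  h2 : ∀ p q c, J (p * q) c = J p (q * c) + J q (cst p * c)

abbrev SD (n : ℕ) (B A : Type) [CommRing B] [CommRing A] :=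
  ((Matrix (Fin n) (Fin n) A)ˣ → SteinbergGroup n B) ⋊[actΓ n A (SteinbergGroup n B)] (Matrix (Fin n) (Fin n) A)ˣ

noncomputable def FF (D : Dat B A) (i j : Fin n) (h : i ≠ j) (p : A) : SD n B A :=
  ⟨fun γ => ZZ (D.J p) γ i j, tvU i j h (D.cst p)⟩

lemma FF_mul_left (D : Dat B A) (i j k l : Fin n) (h : i ≠ j) (h' : k ≠ l) (p q : A) :
    (FF D i j h p * FF D k l h' q).left = fun γ => ZZ (D.J p) γ i j * ZZ (D.J q) (γ * tvU i j h (D.cst p)) k l := rfl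

lemma FF_h1 (D : Dat B A) (i j : Fin n) (h : i ≠ j) (p q : A) : FF D i j h (p + q) = FF D i j h p * FF D i j h q := by
  ext1
  · rw [FF_mul_left]
    funext γ
    rw [ZZ_tv0 _ _ _ _ _ _ _ _ h h.symm h, ← ZZ_addj, ← map_add]; rfl
  · show tvU i j h (D.cst (p + q)) = tvU i j h (D.cst p) * tvU i j h (D.cst q)
    rw [map_add, tvU_add]

lemma FF_h2 (D : Dat B A) (i j h k : Fin n) (hij : i ≠ j) (hhk : h ≠ k) (hjh : j ≠ h) (hik : i ≠ k) (r s : A) :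
    Commute (FF D i j hij r) (FF D h k hhk s) := by
  rw [commute_iff_eq]
  ext1
  · rw [FF_mul_left, FF_mul_left]
    funext γ
    rw [ZZ_tv0 _ _ _ _ _ _ _ _ hhk hjh hik, ZZ_tv0 _ _ _ _ _ _ _ _ hij hik.symm hjh.symm]
    exact ZZ_comm _ _ _ _ _ _ _ hij hhk hjh hik
  · exact tvU_comm _ _ _ _ hij hhk hjh hik _ _

lemma FF_h3 (D : Dat B A) (i j k : Fin n) (hij : i ≠ j) (hjk : j ≠ k) (hik : i ≠ k) (r s : A) :
    FF D i j hij r * FF D j k hjk s = FF D i k hik (r * s) * (FF D j k hjk s * FF D i j hij r) := by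
  ext1
  · funext γ
    show ZZ (D.J r) γ i j * ZZ (D.J s) (γ * tvU i j hij (D.cst r)) j k =
      ZZ (D.J (r * s)) γ i k * (ZZ (D.J s) (γ * tvU i k hik (D.cst (r * s))) j k *
        ZZ (D.J r) (γ * tvU i k hik (D.cst (r * s)) * tvU j k hjk (D.cst s)) i j)
    rw [ZZ_tv2 _ _ _ _ _ _ _ hjk hik, ZZ_tv0 _ _ _ _ _ _ _ _ hjk hjk.symm hik,
      ZZ_tv1 _ _ _ _ _ _ _ hij hik.symm, ZZ_tv0 _ _ _ _ _ _ _ _ hij hik.symm hij,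
      ZZ_tv0 _ _ _ _ _ _ _ _ hik hik.symm hik]
    have e1 : ZZ (D.J r) γ i j * ZZ (D.J s) γ j k =
        ZZ (D.J s) γ j k * ZZ (js (r - D.cst r) (D.J s)) γ i k * ZZ (D.J r) γ i j := by
      have := ZZ_equiv (D.J s) (ZZ (D.J r) γ i j) γ j k
      rw [GG_ZZ _ _ _ _ hij, D.h1, ZZ_tv2 _ _ _ _ _ _ _ hjk hik, MulAut.conj_apply] at this
      rw [← this]; group
    have c1 : ∀ f g : A →ₗ[B] B, Commute (ZZ f γ i k) (ZZ g γ i j) := fun f g =>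
      ZZ_comm _ _ _ _ _ _ _ hik hij hik.symm hij
    have c2 : ∀ f g : A →ₗ[B] B, Commute (ZZ f γ i k) (ZZ g γ j k) := fun f g =>
      ZZ_comm _ _ _ _ _ _ _ hik hjk hjk.symm hik
    have e2 : D.J (r * s) + js (-D.cst s) (D.J r) = js (r - D.cst r) (D.J s) + js (D.cst r) (D.J s) := by
      ext c
      simp only [js, LinearMap.add_apply, LinearMap.comp_apply, LinearMap.mulLeft_apply]
      rw [mul_comm r s, D.h2, ← map_add (D.J s), neg_mul, map_neg, ← add_mul, sub_add_cancel]
      abel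
    calc _ = ZZ (D.J r) γ i j * ZZ (D.J s) γ j k * ZZ (js (D.cst r) (D.J s)) γ i k := by rw [mul_assoc]
      _ = ZZ (D.J s) γ j k * ZZ (D.J r) γ i j * (ZZ (js (r - D.cst r) (D.J s)) γ i k * ZZ (js (D.cst r) (D.J s)) γ i k) := by
          rw [e1, mul_assoc (ZZ (D.J s) γ j k), (c1 _ _).eq]; simp only [mul_assoc]
      _ = ZZ (D.J s) γ j k * ZZ (D.J r) γ i j * (ZZ (D.J (r * s)) γ i k * ZZ (js (-D.cst s) (D.J r)) γ i k) := by
          rw [← ZZ_addj, ← e2, ZZ_addj]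
      _ = _ := by
          rw [← mul_assoc, ← ((c2 (D.J (r * s)) (D.J s)).mul_right (c1 (D.J (r * s)) (D.J r))).eq]
          simp only [mul_assoc]
  · show tvU i j hij (D.cst r) * tvU j k hjk (D.cst s) =
      tvU i k hik (D.cst (r * s)) * (tvU j k hjk (D.cst s) * tvU i j hij (D.cst r))
    rw [map_mul]
    exact tvU_mul _ _ _ hij hjk hik _ _

noncomputable def Psi (D : Dat B A) : SteinbergGroup n A →* SD n B A :=
  stLift (FF D) (FF_h1 D) (FF_h2 D) (FF_h3 D)

lemma Psi_x (D : Dat B A) (i j : Fin n) (h : i ≠ j) (p : A) : Psi D (x i j p) = FF D i j h p :=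
  stLift_x _ _ _ _ _ _ _ _

end zz
end TL


namespace TL

section nat
variable {n : ℕ} {B A : Type} [CommRing B] [CommRing A] (φ : B →+* A) (μ : SteinbergGroup n B →* SteinbergGroup n A)

lemma nat_x (h : ∀ i j (_ : i ≠ j) b, μ (x i j b) = x i j (φ b)) (i j : Fin n) (b : B) : μ (x i j b) = x i j (φ b) := by
  by_cases e : i = j
  · subst e; rw [x_self, x_self, map_one]
  · exact h i j e b

lemma nat_row (h : ∀ i j (_ : i ≠ j) b, μ (x i j b) = x i j (φ b)) (i : Fin n) (v : Fin n → B) :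
    μ (row i v) = row i (φ ∘ v) := by
  refine vec_ind (p := fun v => μ (row i v) = row i (φ ∘ v)) v ?_ ?_ ?_
  · rw [row_zero, map_one, show φ ∘ (0 : Fin n → B) = 0 from funext fun _ => map_zero φ, row_zero]
  · intro v w hv hw
    rw [row_add, map_mul, hv, hw, ← row_add, show φ ∘ (v + w) = φ ∘ v + φ ∘ w from funext fun _ => map_add φ _ _]
  · intro k c
    rw [row_single, nat_x φ μ h, ← row_single]
    congr 1
    funext l
    exact (Pi.apply_single (fun _ => φ) (fun _ => map_zero φ) k _ l).symm

lemma nat_col (h : ∀ i j (_ : i ≠ j) b, μ (x i j b) = x i j (φ b)) (i : Fin n) (v : Fin n → B) :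
    μ (col i v) = col i (φ ∘ v) := by
  refine vec_ind (p := fun v => μ (col i v) = col i (φ ∘ v)) v ?_ ?_ ?_
  · rw [col_zero, map_one, show φ ∘ (0 : Fin n → B) = 0 from funext fun _ => map_zero φ, col_zero]
  · intro v w hv hw
    rw [col_add, map_mul, hv, hw, ← col_add, show φ ∘ (v + w) = φ ∘ v + φ ∘ w from funext fun _ => map_add φ _ _]
  · intro k c
    rw [col_single, nat_x φ μ h, ← col_single]
    congr 1
    funext l
    exact (Pi.apply_single (fun _ => φ) (fun _ => map_zero φ) k _ l).symm

lemma nat_X (h : ∀ i j (_ : i ≠ j) b, μ (x i j b) = x i j (φ b)) (i : Fin n) (u v : Fin n → B) :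
    μ (X i u v) = X i (φ ∘ u) (φ ∘ v) := by
  rw [X, X, M, M, map_mul, map_commutatorElement, nat_row φ μ h, nat_row φ μ h, nat_col φ μ h]
  congr 2
  funext l
  simp

lemma nat_kap (u : Fin n → B) (k l : Fin n) (c : B) : φ ∘ kap u k l c = kap (φ ∘ u) k l (φ c) := by
  funext m
  simp only [kap, Function.comp_apply, Pi.add_apply, map_add, Pi.single_apply, apply_ite φ, map_mul, map_neg, map_zero]

variable [hn : Fact (4 ≤ n)]

lemma nat_P (h : ∀ i j (_ : i ≠ j) b, μ (x i j b) = x i j (φ b)) (u : Fin n → B) (C : Matrix (Fin n) (Fin n) B) :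
    μ (P u C) = P (φ ∘ u) (C.map φ) := by
  induction C using Matrix.induction_on' with
  | h_zero => rw [P_zero, map_one, Matrix.map_zero _ (map_zero φ), P_zero]
  | h_add C D hC hD => rw [P_add, map_mul, hC, hD, ← P_add, Matrix.map_add _ (map_add φ)]
  | h_std_basis k l c => rw [P_single, Matrix.map_single, P_single, Xe, nat_X φ μ h, nat_kap, Xe]

end nat

section core
variable {n : ℕ} {B A : Type} [CommRing B] [CommRing A] [Algebra B A] [hn : Fact (4 ≤ n)] [Loc B A]

instance locSelf : Loc A A where
  H1 c := ⟨1, c, by simp, by simp⟩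
  H2 b h := ⟨1, by simp, by simpa using h⟩

lemma nat_PU (μ : SteinbergGroup n B →* SteinbergGroup n A)
    (h : ∀ i j (_ : i ≠ j) b, μ (x i j b) = x i j (algebraMap B A b)) (j : A →ₗ[B] B) (U : Fin n → A)
    (C : Matrix (Fin n) (Fin n) A) :
    μ (PU j U C) = PU (LinearMap.mulLeft A (algebraMap B A (j 1))) U C := by
  obtain ⟨σ, t, u, hr⟩ := exists_rep (B := B) U
  have hr' : IsRep U (algebraMap B A σ) t (algebraMap B A ∘ u) := ⟨hr.unit, hr.eq⟩
  rw [PU_eq j U C σ t u hr, PU_eq _ U C _ _ _ hr', nat_P (algebraMap B A) μ h]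
  congr 1
  ext k l
  simp only [jm, Matrix.map_apply, LinearMap.mulLeft_apply]
  rw [j_eta, mul_comm]

lemma GG_self (b : SteinbergGroup n A) : GG A b = rep b := by
  ext1
  rw [GG_val]
  ext k l
  rfl

lemma nat_ZZ (μ : SteinbergGroup n B →* SteinbergGroup n A)
    (h : ∀ i j (_ : i ≠ j) b, μ (x i j b) = x i j (algebraMap B A b)) (j : A →ₗ[B] B) (g : SteinbergGroup n A)
    (i k : Fin n) (hik : i ≠ k) :
    μ (ZZ j (rep g) i k) = g * x i k (algebraMap B A (j 1)) * g⁻¹ := by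
  rw [ZZ, nat_PU μ h]
  have := ZZ_equiv (LinearMap.mulLeft A (algebraMap B A (j 1))) g 1 i k
  rw [GG_self, mul_one, ZZ_one _ _ _ hik, MulAut.conj_apply, LinearMap.mulLeft_apply, mul_one] at this
  exact this.symm

lemma Psi_mul_left (D : Dat B A) (g g' : SteinbergGroup n A) (γ) :
    (Psi D (g * g')).left γ = (Psi D g).left γ * (Psi D g').left (γ * (Psi D g).right) := by
  rw [map_mul]; rfl

lemma Psi_right (D : Dat B A) (E : SteinbergGroup n A →* SteinbergGroup n A)
    (hE : ∀ i j (_ : i ≠ j) b, E (x i j b) = x i j (D.cst b)) (g : SteinbergGroup n A) :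
    (Psi D g).right = rep (E g) := by
  induction g using st_ind with
  | h1 => rw [map_one, map_one, map_one]; rfl
  | hm a b ha hb => rw [map_mul, map_mul, map_mul, SemidirectProduct.mul_right, ha, hb]
  | hx i j hij r => rw [Psi_x _ _ _ hij, hE i j hij, rep_x _ _ hij]; rfl

lemma Psi_right' (D : Dat B A) (μ : SteinbergGroup n B →* SteinbergGroup n A)
    (h : ∀ i j (_ : i ≠ j) b, μ (x i j b) = x i j (algebraMap B A b)) (E : SteinbergGroup n B →* SteinbergGroup n B)
    (hE : ∀ i j (_ : i ≠ j) b, E (x i j b) = x i j (b - D.J (algebraMap B A b) 1)) (g : SteinbergGroup n B) :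
    (Psi D (μ g)).right = GG A (E g) := by
  induction g using st_ind with
  | h1 => rw [map_one, map_one, map_one, map_one]; rfl
  | hm a b ha hb => rw [map_mul, map_mul, map_mul, map_mul, SemidirectProduct.mul_right, ha, hb]
  | hx i j hij r =>
    rw [h i j hij, Psi_x _ _ _ hij, hE i j hij]
    ext1
    rw [GG_val, rep_x _ _ hij, tvU_val]
    show 1 + Matrix.single i j (D.cst (algebraMap B A r)) = _
    rw [Matrix.map_add _ (map_add _), Matrix.map_one _ (map_zero _) (map_one _), Matrix.map_single, map_sub, D.h1]
    simp

lemma Psi_one_left (D : Dat B A) (γ) : (Psi D (1 : SteinbergGroup n A)).left γ = 1 := by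
  rw [map_one]; rfl

lemma mu_Psi (D : Dat B A) (μ : SteinbergGroup n B →* SteinbergGroup n A)
    (h : ∀ i j (_ : i ≠ j) b, μ (x i j b) = x i j (algebraMap B A b)) (E : SteinbergGroup n A →* SteinbergGroup n A)
    (hE : ∀ i j (_ : i ≠ j) b, E (x i j b) = x i j (D.cst b)) (g : SteinbergGroup n A) :
    ∀ c, μ ((Psi D g).left (rep c)) = c * g * (E g)⁻¹ * c⁻¹ := by
  induction g using st_ind with
  | h1 => intro c; rw [Psi_one_left]; simp
  | hm a b ha hb =>
    intro c
    rw [Psi_mul_left, map_mul, ha, Psi_right D E hE, ← map_mul, hb, map_mul]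
    group
  | hx i j hij r =>
    intro c
    rw [Psi_x _ _ _ hij, hE i j hij, ← x_neg, mul_assoc c, ← x_add, ← sub_eq_add_neg, ← D.h1]
    exact nat_ZZ μ h _ _ _ _ hij

lemma Psi_mu (D : Dat B A) (μ : SteinbergGroup n B →* SteinbergGroup n A)
    (h : ∀ i j (_ : i ≠ j) b, μ (x i j b) = x i j (algebraMap B A b)) (E : SteinbergGroup n B →* SteinbergGroup n B)
    (hE : ∀ i j (_ : i ≠ j) b, E (x i j b) = x i j (b - D.J (algebraMap B A b) 1)) (g : SteinbergGroup n B) :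
    ∀ c, (Psi D (μ g)).left (GG A c) = c * g * (E g)⁻¹ * c⁻¹ := by
  induction g using st_ind with
  | h1 => intro c; rw [map_one, Psi_one_left]; simp
  | hm a b ha hb =>
    intro c
    rw [map_mul, Psi_mul_left, ha, Psi_right' D μ h E hE, ← map_mul, hb, map_mul]
    group
  | hx i j hij r =>
    intro c
    rw [h i j hij, Psi_x _ _ _ hij, hE i j hij, ← x_neg, mul_assoc c, ← x_add]
    have := ZZ_equiv (D.J (algebraMap B A r)) c 1 i j
    rw [mul_one, ZZ_one _ _ _ hij, MulAut.conj_apply] at this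
    rw [show r + -(r - D.J (algebraMap B A r) 1) = D.J (algebraMap B A r) 1 by ring, this]
    rfl

theorem core (D : Dat B A) (μ : SteinbergGroup n B →* SteinbergGroup n A)
    (h : ∀ i j (_ : i ≠ j) b, μ (x i j b) = x i j (algebraMap B A b)) (E : SteinbergGroup n A →* SteinbergGroup n A)
    (hE : ∀ i j (_ : i ≠ j) b, E (x i j b) = x i j (D.cst b)) (E' : SteinbergGroup n B →* SteinbergGroup n B)
    (hE' : ∀ i j (_ : i ≠ j) b, E' (x i j b) = x i j (b - D.J (algebraMap B A b) 1))
    (K : Subgroup (SteinbergGroup n A)) (hK : ∀ g ∈ K, E g = 1) :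
    ∃ T : K →* SteinbergGroup n B, (∀ g, μ (T g) = g) ∧
      ∀ g, E' g = 1 → ∀ hm : μ g ∈ K, T ⟨μ g, hm⟩ = g := by
  refine ⟨{ toFun := fun g => (Psi D g.1).left 1
            map_one' := Psi_one_left D 1
            map_mul' := fun a b => ?_ }, ?_, ?_⟩
  · show (Psi D (a.1 * b.1)).left 1 = _
    rw [Psi_mul_left, Psi_right D E hE, hK a.1 a.2, map_one, mul_one]
  · intro g
    have := mu_Psi D μ h E hE g.1 1
    rw [hK g.1 g.2, map_one] at this
    simpa using this
  · intro g hg hm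
    have := Psi_mu D μ h E' hE' g 1
    rw [hg, map_one] at this
    simpa using this

def stMap {B A : Type} [CommRing B] [CommRing A] (φ : B →+* A) : SteinbergGroup n B →* SteinbergGroup n A :=
  stLift (fun i j _ r => x i j (φ r)) (fun i j _ r s => by rw [map_add, x_add])
    (fun i j h k _ _ h1 h2 r s => x_comm i j h k h1 h2 _ _)
    (fun i j k h1 h2 h3 r s => by rw [map_mul, ← mul_assoc]; exact x_mul i j k h1 h2 h3 _ _)

lemma stMap_x {B A : Type} [CommRing B] [CommRing A] (φ : B →+* A) (i j : Fin n) (h : i ≠ j) (r : B) :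
    stMap φ (x i j r) = x i j (φ r) := stLift_x _ _ _ _ _ _ h _

end core

section fib
variable (R : Type) [CommRing R] (a : R)

noncomputable instance fibAlg : Algebra (fiberRing R a) (Polynomial (Localization.Away a)) :=
  ((RingHom.snd R (Polynomial (Localization.Away a))).comp (fiberRing R a).subtype).toAlgebra

lemma fibAlg_map (b : fiberRing R a) : algebraMap (fiberRing R a) (Polynomial (Localization.Away a)) b = b.val.2 := rfl

lemma fib_mem (b : fiberRing R a) : Polynomial.eval 0 b.val.2 = algebraMap R (Localization.Away a) b.val.1 := b.2

noncomputable def sB : R →+* fiberRing R a where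
  toFun r := ⟨(r, Polynomial.C (algebraMap R _ r)), by
    show Polynomial.eval 0 (Polynomial.C _) = _; simp⟩
  map_one' := by ext1; simp
  map_zero' := by ext1; simp
  map_add' _ _ := by ext1; simp
  map_mul' _ _ := by ext1; simp

lemma sB_val (r : R) : (sB R a r).val = (r, Polynomial.C (algebraMap R _ r)) := rfl

lemma sB_unit (N : ℕ) : IsUnit (algebraMap (fiberRing R a) (Polynomial (Localization.Away a)) (sB R a (a ^ N))) := by
  rw [fibAlg_map, sB_val, map_pow, map_pow]
  exact ((IsLocalization.Away.algebraMap_isUnit a).map Polynomial.C).pow N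

instance fibLoc : Loc (fiberRing R a) (Polynomial (Localization.Away a)) where
  H1 c := by
    obtain ⟨N, r, h⟩ := IsLocalization.Away.surj a (Polynomial.eval 0 c)
    refine ⟨sB R a (a ^ N), ⟨(r, Polynomial.C (algebraMap R _ (a ^ N)) * c), ?_⟩, sB_unit R a N, rfl⟩
    show Polynomial.eval 0 (_ * _) = _
    rw [Polynomial.eval_mul, Polynomial.eval_C, ← h, map_pow, mul_comm]
  H2 b h := by
    rw [fibAlg_map] at h
    have h0 := fib_mem R a b
    rw [h, Polynomial.eval_zero, ← map_zero (algebraMap R (Localization.Away a))] at h0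
    obtain ⟨⟨_, N, rfl⟩, h1⟩ := (IsLocalization.eq_iff_exists (Submonoid.powers a) _).1 h0
    refine ⟨sB R a (a ^ N), sB_unit R a N, ?_⟩
    ext1
    refine Prod.ext ?_ ?_
    · show a ^ N * b.val.1 = 0
      simpa using h1.symm
    · show _ * b.val.2 = 0
      rw [h, mul_zero]

noncomputable def fibJ (h : Polynomial (Localization.Away a)) (h0 : Polynomial.eval 0 h = 0) :
    Polynomial (Localization.Away a) →ₗ[fiberRing R a] fiberRing R a where
  toFun c := ⟨(0, h * c), by show Polynomial.eval 0 (_ * _) = _; simp [h0]⟩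
  map_add' c d := by ext1; simp [mul_add]
  map_smul' b c := by
    ext1
    refine Prod.ext ?_ ?_
    · show (0 : R) = b.val.1 * 0
      simp
    · show h * (b.val.2 * c) = b.val.2 * (h * c)
      ring

noncomputable def fibDat : Dat (fiberRing R a) (Polynomial (Localization.Away a)) where
  cst := Polynomial.C.comp (Polynomial.evalRingHom 0)
  J := { toFun := fun p => fibJ R a (p - Polynomial.C (Polynomial.eval 0 p)) (by simp)
         map_zero' := by
          ext c : 2
          exact Prod.ext rfl (show (0 - Polynomial.C (Polynomial.eval 0 0)) * c = 0 by simp)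
         map_add' := fun p q => by
          ext c : 2
          refine Prod.ext (show (0 : R) = 0 + 0 by simp) (show (p + q - Polynomial.C (Polynomial.eval 0 (p + q))) * c =
            (p - Polynomial.C (Polynomial.eval 0 p)) * c + (q - Polynomial.C (Polynomial.eval 0 q)) * c from ?_)
          rw [Polynomial.eval_add, map_add]; ring }
  h1 p := by
    show (p - Polynomial.C (Polynomial.eval 0 p)) * 1 = _
    rw [mul_one]; rfl
  h2 p q c := by
    ext1
    refine Prod.ext (show (0 : R) = 0 + 0 by simp) (show (p * q - Polynomial.C (Polynomial.eval 0 (p * q))) * c =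
      (p - Polynomial.C (Polynomial.eval 0 p)) * (q * c) +
      (q - Polynomial.C (Polynomial.eval 0 q)) * (Polynomial.C (Polynomial.eval 0 p) * c) from ?_)
    rw [Polynomial.eval_mul, map_mul]; ring

end fib
end TL

theorem stmt5 (n : ℕ) (hn : 4 ≤ n) : TulenbaevLifting n := by
  intro R _ a _ pSt hp μSt hμ ev0 hev
  haveI : Fact (4 ≤ n) := ⟨hn⟩
  have hp' : ∀ i j (_ : i ≠ j) b, pSt (TL.x i j b) = TL.x i j b.val.1 := by
    intro i j h b; rw [TL.x_of i j h, TL.x_of i j h, hp]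
  have hev' : ∀ i j (_ : i ≠ j) b, ev0 (TL.x i j b) = TL.x i j (Polynomial.eval 0 b) := by
    intro i j h b; rw [TL.x_of i j h, TL.x_of i j h, hev]
  obtain ⟨T, h1, h2⟩ := TL.core (TL.fibDat R a) μSt
    (by intro i j h b; rw [TL.x_of i j h, TL.x_of i j h, hμ]; rfl)
    ((TL.stMap Polynomial.C).comp ev0)
    (by intro i j h b; rw [MonoidHom.comp_apply, hev' i j h, TL.stMap_x _ _ _ h]; rfl)
    ((TL.stMap (TL.sB R a)).comp pSt)
    (by
      intro i j h b
      rw [MonoidHom.comp_apply, hp' i j h, TL.stMap_x _ _ _ h]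
      congr 1
      ext1
      refine Prod.ext (show b.val.1 = b.val.1 - 0 by simp) (show Polynomial.C (algebraMap R _ b.val.1) =
        b.val.2 - (b.val.2 - Polynomial.C (Polynomial.eval 0 b.val.2)) * 1 from ?_)
      rw [TL.fib_mem]; ring)
    ev0.ker (by intro g hg; rw [MonoidHom.comp_apply, MonoidHom.mem_ker.1 hg, map_one])
  refine ⟨T, h1, fun h hh hm => h2 h ?_ hm⟩
  rw [MonoidHom.comp_apply, hh, map_one]
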